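/- arXiv:0805.2810 — 11 statements merged into one kernel-verified Lean document; each statement's English description precedes it below -/
import Mathlib

section
/- Let β : Fin r → ℝ^m and β' : Fin r' → ℝ^m be injective, and let P_i (i ∈ Fin r) and P'_j (j ∈ Fin r') be nonzero real polynomials in m variables. If ∑_i P_i(u)·exp(β_i·u) = ∑_j P'_j(u)·exp(β'_j·u) for every u ∈ ℝ^m (with β·u the standard dot product), then r = r' and there is a bijection e : Fin r → Fin r' with β'_{e(i)} = β_i and P'_{e(i)} = P_i for all i. In particular the two sets of exponent vectors {β_i} and {β'_j} coincide. -/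
open Filter Topology in
theorem aux_decay (p : Polynomial ℝ) (c : ℝ) (hc : 0 < c) :
    Tendsto (fun t : ℝ => p.eval t * Real.exp (-(c * t))) atTop (𝓝 0) := by
  have h1 := (Polynomial.tendsto_div_exp_atTop (p.comp (Polynomial.C (1/c) * Polynomial.X))).comp
    (tendsto_id.const_mul_atTop hc)
  refine h1.congr fun t => ?_
  have : 1 / c * (c * t) = t := by field_simp
  simp only [Function.comp, Polynomial.eval_comp, Polynomial.eval_mul, Polynomial.eval_C,
    Polynomial.eval_X, id, this, Real.exp_neg, div_eq_mul_inv]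
  simp only [div_eq_mul_inv] at this
  rw [this]

open Filter Topology in
theorem aux_one (S : Finset ℝ) : ∀ (p : ℝ → Polynomial ℝ),
    (∀ t : ℝ, ∑ c ∈ S, (p c).eval t * Real.exp (c * t) = 0) → ∀ c ∈ S, p c = 0 := by
  induction S using Finset.induction_on_max with
  | empty => simp
  | insert a s hs ih =>
    intro p h
    have ha : a ∉ s := fun h => lt_irrefl _ (hs a h)
    have hpa : p a = 0 := by
      have h1 : Tendsto (fun t : ℝ => -∑ c ∈ s, (p c).eval t * Real.exp (-((a - c) * t)))
          atTop (𝓝 (-∑ c ∈ s, 0)) :=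
        (tendsto_finset_sum _ fun c hc => aux_decay (p c) (a - c) (sub_pos.2 (hs c hc))).neg
      have h2 : Tendsto (fun t : ℝ => (p a).eval t) atTop (𝓝 0) := by
        simp only [Finset.sum_const_zero, neg_zero] at h1
        refine h1.congr fun t => ?_
        have h3 := h t
        rw [Finset.sum_insert ha] at h3
        have h4 : ∀ c, (p c).eval t * Real.exp (-((a - c) * t))
            = ((p c).eval t * Real.exp (c * t)) * Real.exp (-(a * t)) := by
          intro c
          rw [mul_assoc, ← Real.exp_add]
          ring_nf
        simp only [h4]
        rw [← Finset.sum_mul]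
        have h5 : Real.exp (a * t) * Real.exp (-(a * t)) = 1 := by
          rw [← Real.exp_add]; simp
        linear_combination (-Real.exp (-(a * t))) * h3 + (p a).eval t * h5
      exact Polynomial.leadingCoeff_eq_zero.1 ((Polynomial.tendsto_nhds_iff _).1 h2).1
    intro c hc
    rcases Finset.mem_insert.1 hc with rfl | hc
    · exact hpa
    · refine ih p (fun t => ?_) c hc
      have := h t
      rw [Finset.sum_insert ha, hpa] at this
      simpa using this

theorem aux_generic {m : ℕ} (S : Finset (Fin m → ℝ)) :
    ∃ u : Fin m → ℝ, Set.InjOn (fun b : Fin m → ℝ => ∑ j, b j * u j) S := by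
  classical
  let q : MvPolynomial (Fin m) ℝ :=
    ∏ x ∈ S.offDiag, ∑ j, MvPolynomial.C (x.1 j - x.2 j) * MvPolynomial.X j
  have hq : q ≠ 0 := by
    refine Finset.prod_ne_zero_iff.2 fun x hx h0 => ?_
    refine (Finset.mem_offDiag.1 hx).2.2 (funext fun k => ?_)
    have := congrArg (MvPolynomial.eval (Pi.single k (1 : ℝ))) h0
    simp [Pi.single_apply] at this
    linarith
  obtain ⟨u, hu⟩ : ∃ u, MvPolynomial.eval u q ≠ 0 := by
    by_contra! hcon
    exact hq (MvPolynomial.funext fun u => by simpa using hcon u)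
  refine ⟨u, fun b hb b' hb' hbb => ?_⟩
  by_contra hne
  apply hu
  rw [map_prod]
  refine Finset.prod_eq_zero (Finset.mem_offDiag.2 ⟨hb, hb', hne⟩ : (b, b') ∈ S.offDiag) ?_
  simp only at hbb
  simp [sub_mul, hbb]

theorem aux_multi {m : ℕ} (S : Finset (Fin m → ℝ)) (Q : (Fin m → ℝ) → MvPolynomial (Fin m) ℝ)
    (h : ∀ u : Fin m → ℝ,
      ∑ b ∈ S, MvPolynomial.eval u (Q b) * Real.exp (∑ j, b j * u j) = 0) :
    ∀ b ∈ S, Q b = 0 := by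
  classical
  obtain ⟨w, hw⟩ := aux_generic S
  intro b hb
  refine MvPolynomial.funext fun v => ?_
  rw [map_zero]
  let f : (Fin m → ℝ) → ℝ := fun b => ∑ j, b j * w j
  let g : ℝ → (Fin m → ℝ) := Function.invFunOn f S
  have hg : ∀ b ∈ S, g (f b) = b := fun b hb => hw.leftInvOn_invFunOn hb
  let R : (Fin m → ℝ) → Polynomial ℝ := fun b =>
    Polynomial.C (Real.exp (∑ j, b j * v j)) *
    MvPolynomial.aeval (fun j => Polynomial.C (v j) + Polynomial.C (w j) * Polynomial.X) (Q b)
  have hR : ∀ b t, (R b).eval t = Real.exp (∑ j, b j * v j) *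
      MvPolynomial.eval (fun j => v j + w j * t) (Q b) := by
    intro b t
    simp only [R, Polynomial.eval_mul, Polynomial.eval_C]
    congr 1
    rw [← Polynomial.coe_evalRingHom, MvPolynomial.aeval_def, MvPolynomial.hom_eval₂,
      MvPolynomial.eval, MvPolynomial.coe_eval₂Hom]
    congr 1
    · ext; simp
    · ext; simp
  have key := aux_one (S.image f) (fun c => R (g c)) (by
    intro t
    rw [Finset.sum_image hw, ← h (fun j => v j + w j * t)]
    refine Finset.sum_congr rfl fun b hb => ?_
    rw [hg b hb, hR]
    have : ∑ j, b j * (v j + w j * t) = (∑ j, b j * v j) + f b * t := by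
      simp only [f, Finset.sum_mul, ← Finset.sum_add_distrib]
      exact Finset.sum_congr rfl fun j _ => by ring
    rw [this, Real.exp_add]
    ring) (f b) (Finset.mem_image_of_mem f hb)
  simp only [hg b hb] at key
  have h0 := hR b 0
  rw [key] at h0
  simpa [Real.exp_ne_zero] using h0

theorem aux_half
    (m r r' : ℕ)
    (β : Fin r → (Fin m → ℝ)) (β' : Fin r' → (Fin m → ℝ))
    (hβ : Function.Injective β) (hβ' : Function.Injective β')
    (P : Fin r → MvPolynomial (Fin m) ℝ) (P' : Fin r' → MvPolynomial (Fin m) ℝ)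
    (hP : ∀ i, P i ≠ 0)
    (h : ∀ u : Fin m → ℝ,
      ∑ i, MvPolynomial.eval u (P i) * Real.exp (∑ j, β i j * u j) =
      ∑ i, MvPolynomial.eval u (P' i) * Real.exp (∑ j, β' i j * u j)) :
    ∀ i, ∃ j, β' j = β i ∧ P' j = P i := by
  classical
  have hsum : ∀ (n : ℕ) (γ : Fin n → (Fin m → ℝ)) (A : Fin n → MvPolynomial (Fin m) ℝ)
      (S : Finset (Fin m → ℝ)) (_ : ∀ i, γ i ∈ S) (u : Fin m → ℝ),
      ∑ b ∈ S, MvPolynomial.eval u (∑ i, if γ i = b then A i else 0) * Real.exp (∑ j, b j * u j)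
      = ∑ i, MvPolynomial.eval u (A i) * Real.exp (∑ j, γ i j * u j) := by
    intro n γ A S hS u
    simp only [map_sum, Finset.sum_mul]
    rw [Finset.sum_comm]
    refine Finset.sum_congr rfl fun i _ => ?_
    rw [Finset.sum_eq_single_of_mem (γ i) (hS i)]
    · simp
    · intro b _ hb
      simp [hb.symm]
  intro i
  have key := aux_multi (Finset.univ.image β ∪ Finset.univ.image β')
    (fun b => (∑ i, if β i = b then P i else 0) - ∑ i, if β' i = b then P' i else 0) (by
      intro u
      simp only [map_sub, sub_mul, Finset.sum_sub_distrib]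
      rw [hsum _ β P _ (by simp), hsum _ β' P' _ (by simp), h u, sub_self]) (β i) (by simp)
  simp only [hβ.eq_iff, Finset.sum_ite_eq', Finset.mem_univ, if_true] at key
  by_cases hex : ∃ j, β' j = β i
  · obtain ⟨j, hj⟩ := hex
    refine ⟨j, hj, ?_⟩
    simp only [← hj, hβ'.eq_iff, Finset.sum_ite_eq', Finset.mem_univ, if_true] at key
    exact (sub_eq_zero.1 key).symm
  · push Not at hex
    simp only [hex, if_false, Finset.sum_const_zero, sub_zero] at key
    exact absurd key (hP i)


/-- Multivariate uniqueness of exponential sums: a finite sum `∑ i, Pᵢ(u) exp(βᵢ·u)` with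
pairwise distinct exponent vectors `βᵢ ∈ ℝ^m` and nonzero polynomial coefficients `Pᵢ`
determines its exponent vectors and the coefficient attached to each of them (the analytic core
of Proposition 2.5 of the paper). -/
theorem exp_sum_polynomial_unique
    (m r r' : ℕ)
    (β : Fin r → (Fin m → ℝ)) (β' : Fin r' → (Fin m → ℝ))
    (hβ : Function.Injective β) (hβ' : Function.Injective β')
    (P : Fin r → MvPolynomial (Fin m) ℝ) (P' : Fin r' → MvPolynomial (Fin m) ℝ)
    (hP : ∀ i, P i ≠ 0) (hP' : ∀ j, P' j ≠ 0)
    (h : ∀ u : Fin m → ℝ,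
      ∑ i, MvPolynomial.eval u (P i) * Real.exp (∑ j, β i j * u j) =
      ∑ i, MvPolynomial.eval u (P' i) * Real.exp (∑ j, β' i j * u j)) :
    r = r' ∧ ∃ e : Fin r ≃ Fin r', ∀ i, β' (e i) = β i ∧ P' (e i) = P i := by

  choose e he using aux_half m r r' β β' hβ hβ' P P' hP h
  choose e' he' using aux_half m r' r β' β hβ' hβ P' P hP' fun u => (h u).symm
  let E : Fin r ≃ Fin r' :=
    ⟨e, e', fun i => hβ (by rw [(he' _).1, (he _).1]), fun j => hβ' (by rw [(he _).1, (he' _).1])⟩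
  exact ⟨by simpa using Fintype.card_congr E, E, he⟩
end

section
/- Let σ, τ be real numbers with σ > 0 and τ > 0, and let b₁, b₂, b₁', b₂' be nonzero integers. Then the identity (4/(b₁b₂u²))·sinh(σb₁u/2)·sinh(τb₂u/2) = (4/(b₁'b₂'u²))·sinh(σb₁'u/2)·sinh(τb₂'u/2) holds for every real u ≠ 0 if and only if either (i) |b₁'| = |b₁| and |b₂'| = |b₂|, or (ii) there exist signs ε, δ ∈ {1, −1} such that σb₁ = ε·τb₂' and τb₂ = δ·σb₁'. -/
theorem cosh_deriv_step (A B C D p q r t : ℝ)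
    (h : ∀ u : ℝ, A * Real.cosh (p * u) + B * Real.cosh (q * u) + C * Real.cosh (r * u)
      + D * Real.cosh (t * u) = 0) :
    ∀ u : ℝ, (A * p ^ 2) * Real.cosh (p * u) + (B * q ^ 2) * Real.cosh (q * u)
      + (C * r ^ 2) * Real.cosh (r * u) + (D * t ^ 2) * Real.cosh (t * u) = 0 := by
  have hc : ∀ k u : ℝ, HasDerivAt (fun u => Real.cosh (k * u)) (Real.sinh (k * u) * k) u := by
    intro k u
    have h0 : HasDerivAt (fun u : ℝ => k * u) k u := by
      simpa using (hasDerivAt_id u).const_mul k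
    exact h0.cosh
  have hs : ∀ k u : ℝ, HasDerivAt (fun u => Real.sinh (k * u) * k)
      (Real.cosh (k * u) * k * k) u := by
    intro k u
    have h0 : HasDerivAt (fun u : ℝ => k * u) k u := by
      simpa using (hasDerivAt_id u).const_mul k
    exact h0.sinh.mul_const k
  have e1 : ∀ u : ℝ, A * (Real.sinh (p * u) * p) + B * (Real.sinh (q * u) * q)
      + C * (Real.sinh (r * u) * r) + D * (Real.sinh (t * u) * t) = 0 := by
    intro u
    have h1 := ((((hc p u).const_mul A).fun_add ((hc q u).const_mul B)).fun_add
      ((hc r u).const_mul C)).fun_add ((hc t u).const_mul D)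
    have h2 := hasDerivAt_const u (0 : ℝ)
    rw [funext h] at h1
    exact h1.unique h2
  intro u
  have h1 := ((((hs p u).const_mul A).fun_add ((hs q u).const_mul B)).fun_add
      ((hs r u).const_mul C)).fun_add ((hs t u).const_mul D)
  have h2 := hasDerivAt_const u (0 : ℝ)
  rw [funext e1] at h1
  have h3 := h1.unique h2
  linear_combination h3

theorem sinh_prod_key (a b c d : ℝ) (ha : a ≠ 0) (hb : b ≠ 0) (hc : c ≠ 0) (hd : d ≠ 0)
    (h : ∀ u : ℝ, c * d * (Real.sinh (a * u) * Real.sinh (b * u)) =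
      a * b * (Real.sinh (c * u) * Real.sinh (d * u))) :
    (a ^ 2 = c ^ 2 ∧ b ^ 2 = d ^ 2) ∨ (a ^ 2 = d ^ 2 ∧ b ^ 2 = c ^ 2) := by
  have h0 : ∀ u : ℝ, (c * d) * Real.cosh ((a + b) * u) + (-(c * d)) * Real.cosh ((a - b) * u)
      + (-(a * b)) * Real.cosh ((c + d) * u) + (a * b) * Real.cosh ((c - d) * u) = 0 := by
    intro u
    rw [add_mul, sub_mul, add_mul, sub_mul, Real.cosh_add, Real.cosh_sub, Real.cosh_add,
      Real.cosh_sub]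
    linear_combination 2 * h u
  have h1 := cosh_deriv_step _ _ _ _ _ _ _ _ h0
  have h2 := cosh_deriv_step _ _ _ _ _ _ _ _ h1
  have h3 := cosh_deriv_step _ _ _ _ _ _ _ _ h2
  have k2 := h2 0
  have k3 := h3 0
  simp only [mul_zero, Real.cosh_zero, mul_one] at k2 k3
  have hne : a * b * (c * d) ≠ 0 := by positivity
  have s : a ^ 2 + b ^ 2 = c ^ 2 + d ^ 2 := by
    apply mul_left_cancel₀ hne
    linear_combination k2 / 8
  have m : 3 * (a ^ 4 + b ^ 4) + 10 * (a ^ 2 * b ^ 2)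
      = 3 * (c ^ 4 + d ^ 4) + 10 * (c ^ 2 * d ^ 2) := by
    apply mul_left_cancel₀ hne
    linear_combination k3 / 4
  have n : a ^ 2 * b ^ 2 = c ^ 2 * d ^ 2 := by
    linear_combination m / 4 - 3 / 4 * (a ^ 2 + b ^ 2 + c ^ 2 + d ^ 2) * s
  have f : (a ^ 2 - c ^ 2) * (a ^ 2 - d ^ 2) = 0 := by
    linear_combination a ^ 2 * s - n
  rcases mul_eq_zero.1 f with f | f
  · left; constructor <;> linarith
  · right; constructor <;> linarith

/-- Proposition 3.15 (Prok01) of the paper: for nonzero integers `b₁ b₂ b₁' b₂'` and sphere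
areas `σ, τ > 0`, the localization values `S_b` and `S_b'` of the circle actions `ψ_b`, `ψ_b'`
on `S² × S²` agree as functions of `u` iff `(|b₁'|, |b₂'|) = (|b₁|, |b₂|)` or the cross
relations `σb₁ = ±τb₂'`, `τb₂ = ±σb₁'` hold. -/
theorem S2xS2_S_eq_iff
    (σ τ : ℝ) (hσ : 0 < σ) (hτ : 0 < τ)
    (b₁ b₂ b₁' b₂' : ℤ) (h1 : b₁ ≠ 0) (h2 : b₂ ≠ 0) (h1' : b₁' ≠ 0) (h2' : b₂' ≠ 0) :
    (∀ u : ℝ, u ≠ 0 →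
        4 / ((b₁ : ℝ) * (b₂ : ℝ) * u ^ 2) *
            (Real.sinh (σ * (b₁ : ℝ) * u / 2) * Real.sinh (τ * (b₂ : ℝ) * u / 2)) =
        4 / ((b₁' : ℝ) * (b₂' : ℝ) * u ^ 2) *
            (Real.sinh (σ * (b₁' : ℝ) * u / 2) * Real.sinh (τ * (b₂' : ℝ) * u / 2))) ↔
      ((|b₁'| = |b₁| ∧ |b₂'| = |b₂|) ∨
        ∃ ε δ : ℝ, (ε = 1 ∨ ε = -1) ∧ (δ = 1 ∨ δ = -1) ∧
          σ * (b₁ : ℝ) = ε * (τ * (b₂' : ℝ)) ∧ τ * (b₂ : ℝ) = δ * (σ * (b₁' : ℝ))) := by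
  have r1 : (b₁ : ℝ) ≠ 0 := by exact_mod_cast h1
  have r2 : (b₂ : ℝ) ≠ 0 := by exact_mod_cast h2
  have r1' : (b₁' : ℝ) ≠ 0 := by exact_mod_cast h1'
  have r2' : (b₂' : ℝ) ≠ 0 := by exact_mod_cast h2'
  constructor
  · intro h
    have key := sinh_prod_key (σ * b₁) (τ * b₂) (σ * b₁') (τ * b₂') (mul_ne_zero hσ.ne' r1)
      (mul_ne_zero hτ.ne' r2) (mul_ne_zero hσ.ne' r1') (mul_ne_zero hτ.ne' r2') (by
        intro u
        rcases eq_or_ne u 0 with rfl | hu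
        · simp
        have e := h (2 * u) (by simpa using hu)
        have ar : ∀ x : ℝ, x * (2 * u) / 2 = x * u := fun x => by ring
        simp only [ar] at e
        generalize Real.sinh (σ * b₁ * u) = s1 at e ⊢
        generalize Real.sinh (τ * b₂ * u) = s2 at e ⊢
        generalize Real.sinh (σ * b₁' * u) = s3 at e ⊢
        generalize Real.sinh (τ * b₂' * u) = s4 at e ⊢
        field_simp at e
        linear_combination σ * τ * e)
    rcases key with ⟨x, y⟩ | ⟨x, y⟩
    · left
      rw [mul_pow, mul_pow] at x y
      have x' := mul_left_cancel₀ (pow_ne_zero 2 hσ.ne') x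
      have y' := mul_left_cancel₀ (pow_ne_zero 2 hτ.ne') y
      exact ⟨(sq_eq_sq_iff_abs_eq_abs _ _).1 (by exact_mod_cast x'.symm),
        (sq_eq_sq_iff_abs_eq_abs _ _).1 (by exact_mod_cast y'.symm)⟩
    · right
      have sg : ∀ p q : ℝ, p ^ 2 = q ^ 2 → ∃ ε : ℝ, (ε = 1 ∨ ε = -1) ∧ p = ε * q := by
        intro p q hpq
        rcases sq_eq_sq_iff_eq_or_eq_neg.1 hpq with e | e
        · exact ⟨1, Or.inl rfl, by linarith⟩
        · exact ⟨-1, Or.inr rfl, by linarith⟩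
      obtain ⟨ε, hε, e1⟩ := sg _ _ x
      obtain ⟨δ, hδ, e2⟩ := sg _ _ y
      exact ⟨ε, δ, hε, hδ, e1, e2⟩
  · rintro (⟨x, y⟩ | ⟨ε, δ, hε, hδ, x, y⟩) u hu
    · rcases abs_eq_abs.1 x with rfl | rfl <;> rcases abs_eq_abs.1 y with rfl | rfl <;>
        simp only [Int.cast_neg, mul_neg, neg_mul, neg_div, Real.sinh_neg, div_neg, neg_neg]
    · have hb : (b₁ : ℝ) * b₂ = ε * δ * (b₁' * b₂') := by
        apply mul_left_cancel₀ (mul_ne_zero hσ.ne' hτ.ne')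
        linear_combination (τ * b₂) * x + ε * (τ * b₂') * y
      rw [hb, x, y]
      rcases hε with rfl | rfl <;> rcases hδ with rfl | rfl <;>
        simp only [one_mul, mul_one, neg_mul, mul_neg, neg_div, Real.sinh_neg, div_neg,
          neg_neg] <;> ring
end

section
/- Let σ, τ be real numbers with σ > 0, τ > 0 and σ/τ irrational, and let b₁, b₂, b₁', b₂' be nonzero integers. Then the identity (4/(b₁b₂u²))·sinh(σb₁u/2)·sinh(τb₂u/2) = (4/(b₁'b₂'u²))·sinh(σb₁'u/2)·sinh(τb₂'u/2) holds for every real u ≠ 0 if and only if |b₁'| = |b₁| and |b₂'| = |b₂|. -/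
open Filter Topology in
theorem aux_exp_tendsto (p : ℝ) (hp : 0 < p) :
    Tendsto (fun u : ℝ => Real.exp (-(p * u))) atTop (𝓝 0) :=
  Real.tendsto_exp_neg_atTop_nhds_zero.comp (tendsto_id.const_mul_atTop hp)

open Filter Topology in
theorem aux_tendsto (p q : ℝ) (hp : 0 < p) (hq : 0 < q) :
    Tendsto (fun u : ℝ => Real.sinh (p * u) * Real.sinh (q * u) * Real.exp (-((p + q) * u)))
      atTop (𝓝 (1 / 4)) := by
  have h : Tendsto (fun u : ℝ => (1 - Real.exp (-((2 * p) * u))) *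
      (1 - Real.exp (-((2 * q) * u))) / 4) atTop (𝓝 ((1 - 0) * (1 - 0) / 4)) :=
    (((aux_exp_tendsto (2 * p) (by linarith)).const_sub 1).mul
      ((aux_exp_tendsto (2 * q) (by linarith)).const_sub 1)).div_const 4
  have e : ((1 : ℝ) - 0) * (1 - 0) / 4 = 1 / 4 := by norm_num
  rw [e] at h
  refine h.congr fun u => ?_
  rw [Real.sinh_eq, Real.sinh_eq,
    show -((2 * p) * u) = -(p * u) + -(p * u) by ring,
    show -((2 * q) * u) = -(q * u) + -(q * u) by ring,
    show -((p + q) * u) = -(p * u) + -(q * u) by ring]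
  simp only [Real.exp_add]
  have a : Real.exp (p * u) * Real.exp (-(p * u)) = 1 := by
    rw [← Real.exp_add]; simp
  have b : Real.exp (q * u) * Real.exp (-(q * u)) = 1 := by
    rw [← Real.exp_add]; simp
  generalize Real.exp (p * u) = A at *
  generalize Real.exp (-(p * u)) = Ai at *
  generalize Real.exp (q * u) = B at *
  generalize Real.exp (-(q * u)) = Bi at *
  have : (A - Ai) / 2 * ((B - Bi) / 2) * (Ai * Bi) =
    (A * Ai - Ai * Ai) * (B * Bi - Bi * Bi) / 4 := by ring
  rw [this, a, b]

open Filter Topology in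
theorem aux_not_lt (p q r s : ℝ) (hp : 0 < p) (hq : 0 < q) (hr : 0 < r) (hs : 0 < s)
    (c d : ℝ) (hd : 0 < d)
    (h : ∀ u : ℝ, 0 < u → c * (Real.sinh (p * u) * Real.sinh (q * u)) =
      d * (Real.sinh (r * u) * Real.sinh (s * u))) : ¬ (p + q < r + s) := by
  intro hlt
  have h1 := ((aux_tendsto p q hp hq).const_mul c).mul
    (aux_exp_tendsto ((r + s) - (p + q)) (by linarith))
  have h2 := (aux_tendsto r s hr hs).const_mul d
  have h3 := h1.congr' (f₂ := fun u : ℝ => d * (Real.sinh (r * u) * Real.sinh (s * u) *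
      Real.exp (-((r + s) * u)))) (by
    filter_upwards [eventually_gt_atTop 0] with u hu
    have := h u hu
    rw [← mul_assoc d, ← this,
      show -((r + s) * u) = -((p + q) * u) + -(((r + s) - (p + q)) * u) by ring, Real.exp_add]
    ring)
  have := tendsto_nhds_unique h2 h3
  linarith

open Filter Topology in
theorem aux_eq (p q r s : ℝ) (hp : 0 < p) (hq : 0 < q) (hr : 0 < r) (hs : 0 < s)
    (c d : ℝ) (hc : 0 < c) (hd : 0 < d)
    (h : ∀ u : ℝ, 0 < u → c * (Real.sinh (p * u) * Real.sinh (q * u)) =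
      d * (Real.sinh (r * u) * Real.sinh (s * u))) : p + q = r + s ∧ c = d := by
  have e : p + q = r + s := le_antisymm
    (not_lt.1 (aux_not_lt r s p q hr hs hp hq d c hc fun u hu => (h u hu).symm))
    (not_lt.1 (aux_not_lt p q r s hp hq hr hs c d hd h))
  refine ⟨e, ?_⟩
  have h1 := (aux_tendsto p q hp hq).const_mul c
  have h2 := (aux_tendsto r s hr hs).const_mul d
  have h3 := h1.congr' (f₂ := fun u : ℝ => d * (Real.sinh (r * u) * Real.sinh (s * u) *
      Real.exp (-((r + s) * u)))) (by
    filter_upwards [eventually_gt_atTop 0] with u hu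
    rw [← mul_assoc d, ← h u hu, e]
    ring)
  have := tendsto_nhds_unique h2 h3
  linarith

theorem aux_even (σ u b : ℝ) :
    Real.sinh (σ * b * u / 2) / b = Real.sinh (σ * |b| / 2 * u) / |b| := by
  rcases abs_choice b with h | h <;> rw [h]
  · congr 2; ring
  · rw [show σ * -b / 2 * u = -(σ * b * u / 2) by ring, Real.sinh_neg, neg_div_neg_eq]

theorem aux_rewrite (σ τ u b c : ℝ) :
    4 / (b * c * u ^ 2) * (Real.sinh (σ * b * u / 2) * Real.sinh (τ * c * u / 2)) =
    4 / u ^ 2 * ((|b| * |c|)⁻¹ *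
      (Real.sinh (σ * |b| / 2 * u) * Real.sinh (τ * |c| / 2 * u))) := by
  have : 4 / (b * c * u ^ 2) * (Real.sinh (σ * b * u / 2) * Real.sinh (τ * c * u / 2)) =
    4 / u ^ 2 * ((Real.sinh (σ * b * u / 2) / b) * (Real.sinh (τ * c * u / 2) / c)) := by
    simp only [div_eq_mul_inv, mul_inv]; ring
  rw [this, aux_even, aux_even]
  simp only [div_eq_mul_inv, mul_inv]; ring

theorem aux_irr (σ τ : ℝ) (hτ : 0 < τ) (hirr : Irrational (σ / τ)) (a b : ℤ) (ha : a ≠ 0)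
    (h : σ * |(a : ℝ)| = τ * |(b : ℝ)|) : False := by
  apply hirr
  refine ⟨(|b| : ℤ) / (|a| : ℤ), ?_⟩
  have : (0 : ℝ) < |(a : ℝ)| := abs_pos.2 (by exact_mod_cast ha)
  push_cast
  rw [div_eq_div_iff this.ne' hτ.ne']
  linarith

/-- The analytic equivalence (i) ⟺ (ii) of Theorem 1.9 (Thmspheres) of the paper: when `σ/τ`
is irrational, the localization values `S_b` and `S_b'` of the circle actions `ψ_b`, `ψ_b'` on
`S² × S²` agree as functions of `u` iff `|b₁'| = |b₁|` and `|b₂'| = |b₂|`. -/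
theorem S2xS2_S_eq_iff_of_irrational
    (σ τ : ℝ) (hσ : 0 < σ) (hτ : 0 < τ) (hirr : Irrational (σ / τ))
    (b₁ b₂ b₁' b₂' : ℤ) (h1 : b₁ ≠ 0) (h2 : b₂ ≠ 0) (h1' : b₁' ≠ 0) (h2' : b₂' ≠ 0) :
    (∀ u : ℝ, u ≠ 0 →
        4 / ((b₁ : ℝ) * (b₂ : ℝ) * u ^ 2) *
            (Real.sinh (σ * (b₁ : ℝ) * u / 2) * Real.sinh (τ * (b₂ : ℝ) * u / 2)) =
        4 / ((b₁' : ℝ) * (b₂' : ℝ) * u ^ 2) *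
            (Real.sinh (σ * (b₁' : ℝ) * u / 2) * Real.sinh (τ * (b₂' : ℝ) * u / 2))) ↔
      (|b₁'| = |b₁| ∧ |b₂'| = |b₂|) := by
  simp only [aux_rewrite]
  constructor
  · intro h
    have p1 : (0 : ℝ) < |(b₁ : ℝ)| := abs_pos.2 (by exact_mod_cast h1)
    have p2 : (0 : ℝ) < |(b₂ : ℝ)| := abs_pos.2 (by exact_mod_cast h2)
    have p1' : (0 : ℝ) < |(b₁' : ℝ)| := abs_pos.2 (by exact_mod_cast h1')
    have p2' : (0 : ℝ) < |(b₂' : ℝ)| := abs_pos.2 (by exact_mod_cast h2')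
    obtain ⟨hs, hm⟩ := aux_eq (σ * |(b₁ : ℝ)| / 2) (τ * |(b₂ : ℝ)| / 2)
      (σ * |(b₁' : ℝ)| / 2) (τ * |(b₂' : ℝ)| / 2)
      (by positivity) (by positivity) (by positivity) (by positivity)
      (|(b₁ : ℝ)| * |(b₂ : ℝ)|)⁻¹ (|(b₁' : ℝ)| * |(b₂' : ℝ)|)⁻¹
      (by positivity) (by positivity)
      (fun u hu => mul_left_cancel₀ (by positivity) (h u hu.ne'))
    have hm := inv_injective hm
    have key : (σ * |(b₁ : ℝ)| - σ * |(b₁' : ℝ)|) * (σ * |(b₁ : ℝ)| - τ * |(b₂' : ℝ)|) = 0 := by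
      have e : τ * |(b₂' : ℝ)| = σ * |(b₁ : ℝ)| + τ * |(b₂ : ℝ)| - σ * |(b₁' : ℝ)| := by linarith
      linear_combination (-σ * |(b₁ : ℝ)|) * e - (σ * τ) * hm
    rcases mul_eq_zero.1 key with k | k
    · have e1 : |(b₁' : ℝ)| = |(b₁ : ℝ)| := mul_left_cancel₀ hσ.ne' (by linarith)
      have e2 : |(b₂' : ℝ)| = |(b₂ : ℝ)| := mul_left_cancel₀ hτ.ne' (by linarith)
      exact ⟨by exact_mod_cast e1, by exact_mod_cast e2⟩
    · exact (aux_irr σ τ hτ hirr b₁ b₂' h1 (by linarith)).elim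
  · rintro ⟨e1, e2⟩ u _
    have e1 : |(b₁' : ℝ)| = |(b₁ : ℝ)| := by exact_mod_cast e1
    have e2 : |(b₂' : ℝ)| = |(b₂ : ℝ)| := by exact_mod_cast e2
    rw [e1, e2]
end

section
/- Let n ≥ 2, let r be a nonzero real number, let κ, κ' be real numbers, and let a, a' : Fin n → ℝ be injective with ∑_j a_j = 0 and ∑_j a'_j = 0. If for every real u one has exp(κu)·∑_{k} exp(r·a_k·u)/∏_{s≠k}(a_k − a_s) = exp(κ'u)·∑_{k} exp(r·a'_k·u)/∏_{s≠k}(a'_k − a'_s), then κ = κ' and there exists a permutation τ of Fin n such that a'_j = a_{τ(j)} for every j. -/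
open Finset

theorem exp_linIndep :
    LinearIndependent ℝ (fun c : ℝ => (fun u : ℝ => Real.exp (c * u))) := by
  let F : ℝ → (Multiplicative ℝ →* ℝ) := fun c =>
    { toFun := fun u => Real.exp (c * u.toAdd)
      map_one' := by simp
      map_mul' := fun x y => by simp [mul_add, Real.exp_add] }
  have hF : Function.Injective F := by
    intro c d hcd
    have h1 := DFunLike.congr_fun hcd (Multiplicative.ofAdd (1 : ℝ))
    simpa [F] using h1
  exact (linearIndependent_monoidHom (Multiplicative ℝ) ℝ).comp F hF

theorem exp_sum_exists {n : ℕ} (b b' w w' : Fin n → ℝ) (hb' : Function.Injective b')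
    (hw' : ∀ k, w' k ≠ 0)
    (h : ∀ u : ℝ, ∑ k, w k * Real.exp (b k * u) = ∑ k, w' k * Real.exp (b' k * u)) (j : Fin n) :
    ∃ k, b' j = b k := by
  classical
  have hli := exp_linIndep
  have heq : (∑ k, Finsupp.single (b k) (w k)) = ∑ k, Finsupp.single (b' k) (w' k) := by
    apply hli
    rw [map_sum, map_sum]
    funext u
    simpa [Finsupp.linearCombination_single, Finset.sum_apply] using h u
  have h2 := DFunLike.congr_fun heq (b' j)
  by_contra! hne
  simp only [Finsupp.finsetSum_apply, Finsupp.single_apply] at h2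
  rw [Finset.sum_eq_zero (fun k _ => if_neg (fun e => hne k e.symm))] at h2
  simp only [hb'.eq_iff] at h2
  simp at h2
  exact hw' j h2.symm

/-- The implication (a) ⟹ (b) in the proof of Proposition 4.3 (Thcp) of the paper: equality of
the localization expressions for `S_ψ` and `S_ψ'` on the coadjoint orbit `ℂP^{n-1}` forces
`κ = κ'` and the eigenvalue families `a`, `a'` to agree up to a permutation. -/
theorem CPn_localization_eq_implies_perm
    (n : ℕ) (hn : 2 ≤ n) (r : ℝ) (hr : r ≠ 0) (κ κ' : ℝ)
    (a a' : Fin n → ℝ) (ha : Function.Injective a) (ha' : Function.Injective a')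
    (hsum : ∑ j, a j = 0) (hsum' : ∑ j, a' j = 0)
    (h : ∀ u : ℝ,
      Real.exp (κ * u) *
          ∑ k, Real.exp (r * a k * u) / ∏ s ∈ univ.erase k, (a k - a s) =
      Real.exp (κ' * u) *
          ∑ k, Real.exp (r * a' k * u) / ∏ s ∈ univ.erase k, (a' k - a' s)) :
    κ = κ' ∧ ∃ τ : Equiv.Perm (Fin n), ∀ j, a' j = a (τ j) := by
  have hw' : ∀ k, (∏ s ∈ univ.erase k, (a' k - a' s))⁻¹ ≠ 0 := by
    intro k
    refine inv_ne_zero (Finset.prod_ne_zero_iff.2 fun s hs => sub_ne_zero.2 fun e => ?_)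
    exact (Finset.mem_erase.1 hs).1 (ha' e).symm
  have hb' : Function.Injective (fun k => κ' + r * a' k) := by
    intro x y hxy
    exact ha' (mul_left_cancel₀ hr (add_left_cancel hxy))
  have key := exp_sum_exists (fun k => κ + r * a k) (fun k => κ' + r * a' k)
    (fun k => (∏ s ∈ univ.erase k, (a k - a s))⁻¹)
    (fun k => (∏ s ∈ univ.erase k, (a' k - a' s))⁻¹) hb' hw' (by
      intro u
      have hu := h u
      rw [Finset.mul_sum, Finset.mul_sum] at hu
      convert hu using 2 with k _ k _ <;>
      · rw [add_mul, Real.exp_add]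
        ring)
  choose τ hτ using key
  have hinj : Function.Injective τ := by
    intro x y hxy
    apply hb'
    simp only [hτ, hxy]
  let e : Equiv.Perm (Fin n) := Equiv.ofBijective τ (Finite.injective_iff_bijective.1 hinj)
  have hs : ∑ j, (κ' + r * a' j) = ∑ j, (κ + r * a j) := by
    rw [← Equiv.sum_comp e (fun j => κ + r * a j)]
    exact Finset.sum_congr rfl fun j _ => hτ j
  rw [Finset.sum_add_distrib, Finset.sum_add_distrib, ← Finset.mul_sum, ← Finset.mul_sum,
    hsum, hsum'] at hs
  have hn0 : (n : ℝ) ≠ 0 := by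
    have : n ≠ 0 := by omega
    exact_mod_cast this
  have hκ : κ = κ' := by
    simp at hs
    rcases hs with hs | hs
    · exact hs.symm
    · omega
  refine ⟨hκ, e, fun j => ?_⟩
  have := hτ j
  rw [hκ] at this
  exact mul_left_cancel₀ hr (add_left_cancel this)
end

section
/- Let b = (b₁,b₂) and b' = (b₁',b₂') be elements of ℤ², both of type 0 (i.e. b₁ ≠ 0, b₂ ≠ 0, b₀ := b₁ − kb₂ ≠ 0, and likewise for b'). If f_b(u) = f_{b'}(u) for every real u, then b ≡ b', i.e. either b' = b, or b₁' = b₁ − kb₂ and b₂' = −b₂. -/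
noncomputable section

/-- `λ = τ - kσ`, the area parameter of the second section of the Hirzebruch surface. -/
def lamH (k : ℤ) (σ τ : ℝ) : ℝ := τ - (k : ℝ) * σ

/-- First coordinate of the centroid of the moment trapezoid with vertices
`(0,0), (σ,0), (0,τ), (σ,λ)`. -/
def c₁H (k : ℤ) (σ τ : ℝ) : ℝ := σ * (τ + 2 * lamH k σ τ) / (3 * (τ + lamH k σ τ))

/-- Second coordinate of the centroid of the moment trapezoid. -/
def c₂H (k : ℤ) (σ τ : ℝ) : ℝ :=
  (τ ^ 2 + τ * lamH k σ τ + lamH k σ τ ^ 2) / (3 * (τ + lamH k σ τ))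

/-- `q_b = c₁ b₁ + c₂ b₂`. -/
def qH (k : ℤ) (σ τ : ℝ) (b₁ b₂ : ℤ) : ℝ :=
  c₁H k σ τ * (b₁ : ℝ) + c₂H k σ τ * (b₂ : ℝ)

/-- `f_b(u) = u² S_{ψ_b}(u)` for `b = (b₁,b₂)` of type 0 on the Hirzebruch surface. -/
def fH (k : ℤ) (σ τ : ℝ) (b₁ b₂ : ℤ) (u : ℝ) : ℝ :=
  Real.exp (qH k σ τ b₁ b₂ * u) *
    (1 / ((b₁ : ℝ) * (b₂ : ℝ))
      - Real.exp (-(τ * (b₂ : ℝ) * u)) / (((b₁ : ℝ) - (k : ℝ) * (b₂ : ℝ)) * (b₂ : ℝ))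
      - Real.exp (-(σ * (b₁ : ℝ) * u)) / ((b₁ : ℝ) * (b₂ : ℝ))
      + Real.exp (-((τ * (b₂ : ℝ) + σ * ((b₁ : ℝ) - (k : ℝ) * (b₂ : ℝ))) * u)) /
          (((b₁ : ℝ) - (k : ℝ) * (b₂ : ℝ)) * (b₂ : ℝ)))

/-- `b = (b₁,b₂)` is of type 0: `b₁ ≠ 0`, `b₂ ≠ 0` and `b₀ = b₁ - k b₂ ≠ 0`. -/
def IsType0 (k b₁ b₂ : ℤ) : Prop := b₁ ≠ 0 ∧ b₂ ≠ 0 ∧ b₁ - k * b₂ ≠ 0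

end

/-- Linear independence of exponentials, in a dual form. -/
lemma exp_sum_dual {n : ℕ} (c x : Fin n → ℝ)
    (h : ∀ u : ℝ, ∑ i, c i * Real.exp (x i * u) = 0) (g : ℝ → ℝ) :
    ∑ i, c i * g (x i) = 0 := by
  classical
  have hpoly : ∀ P : Polynomial ℝ, ∑ i, c i * P.eval (Real.exp (x i)) = 0 := by
    intro P
    induction P using Polynomial.induction_on' with
    | add p q hp hq =>
      simp only [Polynomial.eval_add, mul_add, Finset.sum_add_distrib, hp, hq, add_zero]
    | monomial m a =>
      have := h m
      have h2 : ∑ i, c i * (Polynomial.monomial m a).eval (Real.exp (x i))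
          = a * ∑ i, c i * Real.exp (x i * m) := by
        rw [Finset.mul_sum]
        refine Finset.sum_congr rfl fun i _ => ?_
        rw [Polynomial.eval_monomial, ← Real.exp_nat_mul, mul_comm (m : ℝ)]
        ring
      rw [h2, this, mul_zero]
  let s : Finset ℝ := Finset.univ.image x
  have hinj : Set.InjOn Real.exp (s : Set ℝ) := Real.exp_injective.injOn
  have := hpoly (Lagrange.interpolate s Real.exp g)
  rw [← this]
  refine Finset.sum_congr rfl fun i _ => ?_
  rw [Lagrange.eval_interpolate_at_node g hinj (Finset.mem_image_of_mem x (Finset.mem_univ i))]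

/-- Rigidity of the normal form `a (e^L - e^m) + c (e^R - e^n)`. -/
lemma normal_form_rigid (a c L m n R a' c' L' m' n' R' : ℝ)
    (ha : 0 < a) (hc : 0 < c) (ha' : 0 < a') (hc' : 0 < c')
    (h1 : L < m) (h2 : L < n) (h3 : m < R) (h4 : n < R)
    (h1' : L' < m') (h2' : L' < n') (h3' : m' < R') (h4' : n' < R')
    (h : ∀ g : ℝ → ℝ, a * g L - a * g m + c * g R - c * g n
      = a' * g L' - a' * g m' + c' * g R' - c' * g n') :
    a = a' ∧ c = c' ∧ (a ≠ c → m - L = m' - L') := by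
  have hL : L = L' := by
    rcases lt_trichotomy L L' with hl | hl | hl
    · have := h (fun t => if t = L then 1 else 0)
      simp [h1.ne', h2.ne', (h1.trans h3).ne', hl.ne', (hl.trans h1').ne', (hl.trans h2').ne',
        (hl.trans (h1'.trans h3')).ne'] at this
      linarith
    · exact hl
    · have := h (fun t => if t = L' then 1 else 0)
      simp [h1'.ne', h2'.ne', (h1'.trans h3').ne', hl.ne', (hl.trans h1).ne', (hl.trans h2).ne',
        (hl.trans (h1.trans h3)).ne'] at this
      linarith
  have hR : R = R' := by
    rcases lt_trichotomy R R' with hl | hl | hl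
    · have := h (fun t => if t = R' then 1 else 0)
      simp [h3'.ne, h4'.ne, (h1'.trans h3').ne, hl.ne, (h3.trans hl).ne, (h4.trans hl).ne,
        ((h1.trans h3).trans hl).ne] at this
      linarith
    · exact hl
    · have := h (fun t => if t = R then 1 else 0)
      simp [h3.ne, h4.ne, (h1.trans h3).ne, hl.ne, (h3'.trans hl).ne, (h4'.trans hl).ne,
        ((h1'.trans h3').trans hl).ne] at this
      linarith
  subst hL hR
  have haa : a = a' := by
    have := h (fun t => if t = L then 1 else 0)
    simpa [h1.ne', h2.ne', (h1.trans h3).ne', h1'.ne', h2'.ne'] using this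
  have hcc : c = c' := by
    have := h (fun t => if t = R then 1 else 0)
    simpa [h3.ne, h4.ne, (h1.trans h3).ne, h3'.ne, h4'.ne] using this
  subst haa hcc
  refine ⟨rfl, rfl, fun hac => ?_⟩
  by_contra hm
  have hm' : m' ≠ m := fun e => hm (by rw [e])
  have := h (fun t => if t = m then 1 else 0)
  simp only [h1.ne, h3.ne', hm', if_true, if_false] at this
  by_cases e1 : n = m <;> by_cases e2 : n' = m <;> simp [e1, e2] at this
  · linarith
  · linarith
  · exact hac (by linarith)
  · linarith

lemma q_relation (k : ℤ) (σ τ : ℝ) (hτ : 0 < τ) (hlam : 0 < lamH k σ τ) :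
    c₁H k σ τ * k + 2 * c₂H k σ τ = τ := by
  have hk : (k : ℝ) * σ = τ - lamH k σ τ := by unfold lamH; ring
  unfold c₁H c₂H
  have : τ + lamH k σ τ ≠ 0 := by positivity
  generalize lamH k σ τ = l at *
  field_simp
  linear_combination (τ + 2 * l) * hk

lemma fH_reflect (k : ℤ) (σ τ : ℝ) (hτ : 0 < τ) (hlam : 0 < lamH k σ τ)
    (b₁ b₂ : ℤ) (u : ℝ) :
    fH k σ τ (b₁ - k * b₂) (-b₂) u = fH k σ τ b₁ b₂ u := by
  have hq := q_relation k σ τ hτ hlam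
  have hq' : qH k σ τ (b₁ - k * b₂) (-b₂) = qH k σ τ b₁ b₂ - τ * b₂ := by
    unfold qH; push_cast
    linear_combination (-(b₂ : ℝ)) * hq
  unfold fH
  rw [hq']
  push_cast
  simp only [mul_add, mul_sub, mul_div_assoc', ← Real.exp_add, mul_one, mul_neg, sub_neg_eq_add,
    neg_mul, sub_add_cancel]
  ring_nf
  have hi : (-((b₂ : ℝ) * b₁) + (b₂ : ℝ) ^ 2 * k)⁻¹ = -((b₂ : ℝ) * b₁ - (b₂ : ℝ) ^ 2 * k)⁻¹ := by
    rw [← inv_neg]; ring_nf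
  rw [hi]
  ring

/-- Four-point normal form of `f_b` for `b₂ > 0`. -/
lemma fH_normal (k : ℤ) (σ τ : ℝ) (hσ : 0 < σ) (hτ : 0 < τ) (hlam : 0 < lamH k σ τ)
    (b₁ b₂ : ℤ) (hb : IsType0 k b₁ b₂) (hp : 0 < b₂) :
    ∃ L m n R : ℝ, L < m ∧ L < n ∧ m < R ∧ n < R ∧ m - L = σ * |(b₁ : ℝ)| ∧
      ∀ u : ℝ, fH k σ τ b₁ b₂ (-u) =
        1 / (|(b₁ : ℝ)| * b₂) * Real.exp (L * u) - 1 / (|(b₁ : ℝ)| * b₂) * Real.exp (m * u)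
        + 1 / (|(b₁ : ℝ) - k * b₂| * b₂) * Real.exp (R * u)
        - 1 / (|(b₁ : ℝ) - k * b₂| * b₂) * Real.exp (n * u) := by
  obtain ⟨h1, h2, h0⟩ := hb
  have h1 : (b₁ : ℝ) ≠ 0 := by exact_mod_cast h1
  have h0 : (b₁ : ℝ) - k * b₂ ≠ 0 := by exact_mod_cast h0
  have hp : (0 : ℝ) < b₂ := by exact_mod_cast hp
  have e1 : τ * (b₂ : ℝ) + σ * ((b₁ : ℝ) - k * b₂) = σ * b₁ + lamH k σ τ * b₂ := by
    unfold lamH; ring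
  have hA : 0 < τ * (b₂ : ℝ) := by positivity
  have hB : 0 < lamH k σ τ * (b₂ : ℝ) := by positivity
  unfold fH
  generalize qH k σ τ b₁ b₂ = q
  generalize (b₁ : ℝ) - k * b₂ = d at *
  generalize (b₁ : ℝ) = x at *
  generalize (b₂ : ℝ) = p at *
  generalize lamH k σ τ * p = l at *
  have key : ∀ u v : ℝ, Real.exp ((v - q) * u) = Real.exp (q * -u) * Real.exp (-(v * -u)) := by
    intro u v; rw [← Real.exp_add]; ring_nf
  have key0 : ∀ u : ℝ, Real.exp ((0 - q) * u) = Real.exp (q * -u) := by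
    intro u; ring_nf
  rcases lt_or_gt_of_ne h1 with s1 | s1 <;> rcases lt_or_gt_of_ne h0 with s0 | s0
  · have t1 : σ * x < 0 := mul_neg_of_pos_of_neg hσ s1
    have t0 : σ * d < 0 := mul_neg_of_pos_of_neg hσ s0
    refine ⟨σ * x - q, 0 - q, τ * p + σ * d - q, τ * p - q, by linarith, by linarith, by linarith,
      by linarith, by rw [abs_of_neg s1]; ring, fun u => ?_⟩
    rw [key0, key, key, key, abs_of_neg s1, abs_of_neg s0]
    field_simp
    ring
  · have t1 : σ * x < 0 := mul_neg_of_pos_of_neg hσ s1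
    have t0 : 0 < σ * d := mul_pos hσ s0
    refine ⟨σ * x - q, 0 - q, τ * p - q, τ * p + σ * d - q, by linarith, by linarith, by linarith,
      by linarith, by rw [abs_of_neg s1]; ring, fun u => ?_⟩
    rw [key0, key, key, key, abs_of_neg s1, abs_of_pos s0]
    field_simp
    ring
  · have t1 : 0 < σ * x := mul_pos hσ s1
    have t0 : σ * d < 0 := mul_neg_of_pos_of_neg hσ s0
    refine ⟨0 - q, σ * x - q, τ * p + σ * d - q, τ * p - q, by linarith, by linarith, by linarith,
      by linarith, by rw [abs_of_pos s1]; ring, fun u => ?_⟩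
    rw [key0, key, key, key, abs_of_pos s1, abs_of_neg s0]
    field_simp
    ring
  · have t1 : 0 < σ * x := mul_pos hσ s1
    have t0 : 0 < σ * d := mul_pos hσ s0
    refine ⟨0 - q, σ * x - q, τ * p - q, τ * p + σ * d - q, by linarith, by linarith, by linarith,
      by linarith, by rw [abs_of_pos s1]; ring, fun u => ?_⟩
    rw [key0, key, key, key, abs_of_pos s1, abs_of_pos s0]
    field_simp
    ring

lemma main_pos
    (k : ℤ) (hk : k ≠ 0) (σ τ : ℝ) (hσ : 0 < σ) (hτ : 0 < τ) (hlam : 0 < lamH k σ τ)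
    (b₁ b₂ b₁' b₂' : ℤ) (hb : IsType0 k b₁ b₂) (hb' : IsType0 k b₁' b₂')
    (hp : 0 < b₂) (hp' : 0 < b₂')
    (h : ∀ u : ℝ, fH k σ τ b₁ b₂ u = fH k σ τ b₁' b₂' u) :
    b₁' = b₁ ∧ b₂' = b₂ := by
  obtain ⟨L, m, n, R, o1, o2, o3, o4, e, hf⟩ := fH_normal k σ τ hσ hτ hlam b₁ b₂ hb hp
  obtain ⟨L', m', n', R', o1', o2', o3', o4', e', hf'⟩ :=
    fH_normal k σ τ hσ hτ hlam b₁' b₂' hb' hp'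
  obtain ⟨h1, -, h0⟩ := hb
  obtain ⟨h1', -, h0'⟩ := hb'
  have h1 : (b₁ : ℝ) ≠ 0 := by exact_mod_cast h1
  have h0 : (b₁ : ℝ) - k * b₂ ≠ 0 := by exact_mod_cast h0
  have h1' : (b₁' : ℝ) ≠ 0 := by exact_mod_cast h1'
  have h0' : (b₁' : ℝ) - k * b₂' ≠ 0 := by exact_mod_cast h0'
  have hp : (0 : ℝ) < b₂ := by exact_mod_cast hp
  have hp' : (0 : ℝ) < b₂' := by exact_mod_cast hp'
  have hk : (k : ℝ) ≠ 0 := by exact_mod_cast hk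
  suffices hs : (b₁' : ℝ) = b₁ ∧ (b₂' : ℝ) = b₂ by exact_mod_cast hs
  have a1 := abs_pos.2 h1
  have a0 := abs_pos.2 h0
  have a1' := abs_pos.2 h1'
  have a0' := abs_pos.2 h0'
  have hg : ∀ u, fH k σ τ b₁ b₂ (-u) = fH k σ τ b₁' b₂' (-u) := fun u => h (-u)
  simp only [hf, hf'] at hg
  clear hf hf' h
  obtain ⟨d, hd⟩ : ∃ d, d = (b₁ : ℝ) - k * b₂ := ⟨_, rfl⟩
  obtain ⟨d', hd'⟩ : ∃ d, d = (b₁' : ℝ) - k * b₂' := ⟨_, rfl⟩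
  rw [← hd] at h0 a0 hg
  rw [← hd'] at h0' a0' hg
  generalize (b₁ : ℝ) = x at *
  generalize (b₂ : ℝ) = p at *
  generalize (b₁' : ℝ) = x' at *
  generalize (b₂' : ℝ) = p' at *
  generalize (k : ℝ) = κ at *
  obtain ⟨r1, r2, r3⟩ := normal_form_rigid (1 / (|x| * p)) (1 / (|d| * p)) L m n R
    (1 / (|x'| * p')) (1 / (|d'| * p')) L' m' n' R' (by positivity) (by positivity)
    (by positivity) (by positivity) o1 o2 o3 o4 o1' o2' o3' o4' (by
      intro g
      have := exp_sum_dual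
        ![1 / (|x| * p), -(1 / (|x| * p)), 1 / (|d| * p), -(1 / (|d| * p)),
          -(1 / (|x'| * p')), 1 / (|x'| * p'), -(1 / (|d'| * p')), 1 / (|d'| * p')]
        ![L, m, R, n, L', m', R', n'] (by
          intro u
          have := hg u
          simp [Fin.sum_univ_succ] at this ⊢
          linarith) g
      simp [Fin.sum_univ_succ] at this ⊢
      linarith)
  have q1 : |x| * p = |x'| * p' := by
    have := congrArg (fun t => 1 / t) r1
    simpa only [one_div_one_div] using this
  have q2 : |d| * p = |d'| * p' := by
    have := congrArg (fun t => 1 / t) r2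
    simpa only [one_div_one_div] using this
  by_cases hac : 1 / (|x| * p) = 1 / (|d| * p)
  · have hxd : |x| = |d| := by
      have := congrArg (fun t => 1 / t) hac
      simp only [one_div_one_div] at this
      exact mul_right_cancel₀ hp.ne' this
    have hxd' : |x'| = |d'| := by
      refine mul_right_cancel₀ hp'.ne' ?_
      rw [← q1, ← q2, hxd]
    have f1 : 2 * x = κ * p := by
      rcases abs_eq_abs.1 hxd with t | t
      · exact absurd (show κ * p = 0 by linarith) (mul_ne_zero hk hp.ne')
      · linarith
    have f2 : 2 * x' = κ * p' := by
      rcases abs_eq_abs.1 hxd' with t | t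
      · exact absurd (show κ * p' = 0 by linarith) (mul_ne_zero hk hp'.ne')
      · linarith
    have g1 : 2 * |x| = |κ| * p := by
      rw [← abs_of_pos hp, ← abs_mul, ← f1, abs_mul, abs_two]
    have g2 : 2 * |x'| = |κ| * p' := by
      rw [← abs_of_pos hp', ← abs_mul, ← f2, abs_mul, abs_two]
    have g3 : |κ| * (p ^ 2 - p' ^ 2) = 0 := by
      linear_combination (-p) * g1 + p' * g2 + 2 * q1
    have g4 : p ^ 2 - p' ^ 2 = 0 := (mul_eq_zero.1 g3).resolve_left (abs_pos.2 hk).ne'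
    have g5 : p' = p := by nlinarith
    subst g5
    exact ⟨by linarith, rfl⟩
  · have r := r3 hac
    rw [e, e'] at r
    have hx : |x| = |x'| := mul_left_cancel₀ hσ.ne' r
    have hpp : p = p' := by
      rw [← hx] at q1
      exact mul_left_cancel₀ a1.ne' q1
    subst hpp
    have hdd : |d| = |d'| := mul_right_cancel₀ hp.ne' q2
    refine ⟨?_, rfl⟩
    rcases abs_eq_abs.1 hx with t | t
    · exact t.symm
    · exfalso
      rcases abs_eq_abs.1 hdd with s | s
      · exact h1 (by linarith)
      · exact mul_ne_zero hk hp.ne' (by linarith)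

lemma type0_reflect (k b₁ b₂ : ℤ) (hb : IsType0 k b₁ b₂) : IsType0 k (b₁ - k * b₂) (-b₂) := by
  obtain ⟨h1, h2, h0⟩ := hb
  exact ⟨h0, neg_ne_zero.2 h2, by simpa using h1⟩

/-- The type-0 part of Theorem 1.7 (Propositions 3.4–3.7 of the paper): for two type-0 elements
of `ℤ²`, equality of the functions `f_b = u² S_{ψ_b}` implies `b ≡ b'`, i.e. `b' = b` or
`b' = (b₁ - k b₂, -b₂)`. -/
theorem hirzebruch_type0_S_eq_implies_equiv
    (k : ℤ) (hk : k ≠ 0) (σ τ : ℝ) (hσ : 0 < σ) (hτ : 0 < τ) (hlam : 0 < lamH k σ τ)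
    (b₁ b₂ b₁' b₂' : ℤ) (hb : IsType0 k b₁ b₂) (hb' : IsType0 k b₁' b₂')
    (h : ∀ u : ℝ, fH k σ τ b₁ b₂ u = fH k σ τ b₁' b₂' u) :
    (b₁' = b₁ ∧ b₂' = b₂) ∨ (b₁' = b₁ - k * b₂ ∧ b₂' = -b₂) := by
  rcases lt_or_gt_of_ne hb.2.1 with s | s <;> rcases lt_or_gt_of_ne hb'.2.1 with s' | s'
  · obtain ⟨e1, e2⟩ := main_pos k hk σ τ hσ hτ hlam _ _ _ _ (type0_reflect _ _ _ hb)
      (type0_reflect _ _ _ hb') (by omega) (by omega)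
      (fun u => by rw [fH_reflect k σ τ hτ hlam, fH_reflect k σ τ hτ hlam, h])
    have e3 : b₂' = b₂ := by omega
    subst e3
    exact Or.inl ⟨by linarith, rfl⟩
  · obtain ⟨e1, e2⟩ := main_pos k hk σ τ hσ hτ hlam _ _ _ _ (type0_reflect _ _ _ hb)
      hb' (by omega) (by omega) (fun u => by rw [fH_reflect k σ τ hτ hlam, h])
    exact Or.inr ⟨e1, e2⟩
  · obtain ⟨e1, e2⟩ := main_pos k hk σ τ hσ hτ hlam _ _ _ _ hb
      (type0_reflect _ _ _ hb') (by omega) (by omega)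
      (fun u => by rw [fH_reflect k σ τ hτ hlam, h])
    have e3 : b₂' = -b₂ := by omega
    subst e3
    exact Or.inr ⟨by linarith, rfl⟩
  · exact Or.inl (main_pos k hk σ τ hσ hτ hlam _ _ _ _ hb hb' s s' h)
end

section
/- Let b₁ and b₁' be nonzero integers. If g_{(b₁,0)}(u) = g_{(b₁',0)}(u) for every real u, then b₁ = b₁'. (That is, the map b ↦ S_{ψ_b} is injective on the elements b = (b₁,0) of subtype (1)α.) -/
noncomputable section

/-- `g_b(u) = u² S_{ψ_b}(u)` for `b = (b₁, 0)` with `b₁ ≠ 0` (subtype (1)α). -/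
def gH (k : ℤ) (σ τ : ℝ) (b₁ : ℤ) (u : ℝ) : ℝ :=
  Real.exp (qH k σ τ b₁ 0 * u) *
    (τ * u / (b₁ : ℝ) - (k : ℝ) / (b₁ : ℝ) ^ 2
      - Real.exp (-(σ * (b₁ : ℝ) * u)) *
          (lamH k σ τ * u / (b₁ : ℝ) - (k : ℝ) / (b₁ : ℝ) ^ 2))

/-- `h_b(u) = u² S_{ψ_b}(u)` for `b = (0, b₂)` with `b₂ ≠ 0` (first kind of subtype (1)β). -/
def hH (k : ℤ) (σ τ : ℝ) (b₂ : ℤ) (u : ℝ) : ℝ :=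
  Real.exp (qH k σ τ 0 b₂ * u) *
    (Real.exp (-(τ * (b₂ : ℝ) * u)) / ((k : ℝ) * (b₂ : ℝ) ^ 2)
      - Real.exp (-(lamH k σ τ * (b₂ : ℝ) * u)) / ((k : ℝ) * (b₂ : ℝ) ^ 2)
      + σ * u / (b₂ : ℝ))

/-- `j_b(u) = u² S_{ψ_b}(u)` for `b = (k b₂, b₂)` with `b₂ ≠ 0` (second kind of
subtype (1)β). -/
def jH (k : ℤ) (σ τ : ℝ) (b₂ : ℤ) (u : ℝ) : ℝ :=
  Real.exp (qH k σ τ (k * b₂) b₂ * u) *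
    (1 / ((k : ℝ) * (b₂ : ℝ) ^ 2)
      - Real.exp (-(σ * (k : ℝ) * (b₂ : ℝ) * u)) / ((k : ℝ) * (b₂ : ℝ) ^ 2)
      - σ * u * Real.exp (-(τ * (b₂ : ℝ) * u)) / (b₂ : ℝ))

end

/-- Differentiating an identity between sums of two exponential polynomials of degree one. -/
lemma stepH {A B α C D β A' B' α' C' D' β' : ℝ}
    (h : ∀ u : ℝ, (A * u + B) * Real.exp (α * u) + (C * u + D) * Real.exp (β * u)
      = (A' * u + B') * Real.exp (α' * u) + (C' * u + D') * Real.exp (β' * u)) :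
    ∀ u : ℝ, (α * A * u + (A + α * B)) * Real.exp (α * u)
        + (β * C * u + (C + β * D)) * Real.exp (β * u)
      = (α' * A' * u + (A' + α' * B')) * Real.exp (α' * u)
        + (β' * C' * u + (C' + β' * D')) * Real.exp (β' * u) := by
  intro u
  have key : ∀ A B α : ℝ, HasDerivAt (fun u : ℝ => (A * u + B) * Real.exp (α * u))
      ((α * A * u + (A + α * B)) * Real.exp (α * u)) u := by
    intro A B α
    have h1 : HasDerivAt (fun u : ℝ => A * u + B) (A * 1) u :=
      ((hasDerivAt_id' u).const_mul A).add_const B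
    have h2 : HasDerivAt (fun u : ℝ => Real.exp (α * u)) (Real.exp (α * u) * (α * 1)) u :=
      ((hasDerivAt_id' u).const_mul α).exp
    exact (h1.mul h2).congr_deriv (by ring)
  have hl := (key A B α).add (key C D β)
  have hr := (key A' B' α').add (key C' D' β')
  refine hl.unique (hr.congr_of_eventuallyEq (Filter.Eventually.of_forall ?_))
  intro v
  exact h v

lemma gH_eq (k : ℤ) (σ τ : ℝ) (b : ℤ) (u : ℝ) :
    gH k σ τ b u = (τ / b * u + -(k / (b : ℝ) ^ 2)) * Real.exp (c₁H k σ τ * b * u)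
      + (-(lamH k σ τ / b) * u + k / (b : ℝ) ^ 2) * Real.exp ((c₁H k σ τ - σ) * b * u) := by
  have e : Real.exp ((c₁H k σ τ - σ) * b * u)
      = Real.exp (c₁H k σ τ * b * u) * Real.exp (-(σ * (b : ℝ) * u)) := by
    rw [← Real.exp_add]; congr 1; ring
  rw [e]
  simp only [gH, qH, Int.cast_zero, mul_zero, add_zero]
  ring

/-- The fifth Taylor coefficient (third central moment of the trapezoid) in closed form. -/
lemma momentH (k : ℤ) (σ τ : ℝ) (hσ : 0 < σ) (hτ : 0 < τ) (hlam : 0 < lamH k σ τ) :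
    5 * τ * c₁H k σ τ ^ 4 - k * c₁H k σ τ ^ 5 - 5 * lamH k σ τ * (c₁H k σ τ - σ) ^ 4
      + k * (c₁H k σ τ - σ) ^ 5
    = -(2 / 27) * σ ^ 4 * (k * σ) * (τ ^ 2 + 7 * τ * lamH k σ τ + lamH k σ τ ^ 2)
        / (τ + lamH k σ τ) ^ 2 := by
  have hk : (k : ℝ) = (τ - lamH k σ τ) / σ := by
    unfold lamH; field_simp; ring
  unfold c₁H
  generalize lamH k σ τ = l at *
  have : τ + l ≠ 0 := by positivity
  rw [hk]
  field_simp
  ring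

/-- Proposition 3.13 (PropinyecS1a) of the paper: the map `b ↦ S_{ψ_b}` is injective on the
elements `b = (b₁, 0)` of subtype (1)α. -/
theorem hirzebruch_subtype1alpha_injective
    (k : ℤ) (hk : k ≠ 0) (σ τ : ℝ) (hσ : 0 < σ) (hτ : 0 < τ) (hlam : 0 < lamH k σ τ)
    (b₁ b₁' : ℤ) (hb : b₁ ≠ 0) (hb' : b₁' ≠ 0)
    (h : ∀ u : ℝ, gH k σ τ b₁ u = gH k σ τ b₁' u) :
    b₁ = b₁' := by
  simp only [gH_eq] at h
  have h5 := stepH (stepH (stepH (stepH (stepH h)))) 0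
  simp only [mul_zero, Real.exp_zero, mul_one, zero_add] at h5
  have hbR : (b₁ : ℝ) ≠ 0 := by exact_mod_cast hb
  have hbR' : (b₁' : ℝ) ≠ 0 := by exact_mod_cast hb'
  have hkR : (k : ℝ) ≠ 0 := by exact_mod_cast hk
  have hM := momentH k σ τ hσ hτ hlam
  generalize c₁H k σ τ = c at *
  generalize lamH k σ τ = l at *
  have hM0 : 5 * τ * c ^ 4 - k * c ^ 5 - 5 * l * (c - σ) ^ 4 + k * (c - σ) ^ 5 ≠ 0 := by
    rw [hM]
    have h1 : τ ^ 2 + 7 * τ * l + l ^ 2 ≠ 0 := by positivity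
    have h2 : (τ + l) ^ 2 ≠ 0 := by positivity
    have h3 : σ ≠ 0 := hσ.ne'
    exact div_ne_zero (mul_ne_zero (mul_ne_zero (mul_ne_zero (by norm_num)
      (pow_ne_zero 4 h3)) (mul_ne_zero hkR h3)) h1) h2
  have h6 : (b₁ : ℝ) ^ 3 = (b₁' : ℝ) ^ 3 := by
    apply mul_right_cancel₀ hM0
    clear hM hM0
    field_simp at h5
    linear_combination h5
  have h7 : b₁ ^ 3 = b₁' ^ 3 := by exact_mod_cast h6
  exact (Odd.strictMono_pow (by decide : Odd 3)).injective h7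
end

section
/- Let b and b' be elements of ℤ², each of the form (0,c) or (kc,c) with c a nonzero integer (the elements of subtype (1)β). For b = (0,b₂) set F_b := h_b and for b = (kb₂,b₂) set F_b := j_b, and likewise for b'. If F_b(u) = F_{b'}(u) for every real u, then b ≡ b', i.e. either b' = b, or b₁' = b₁ − kb₂ and b₂' = −b₂. -/
/-- The function `u² S_{ψ_b}` attached to an element `b` of subtype (1)β, i.e. `b = (0, c)` or
`b = (kc, c)` with `c ≠ 0`: it is `h_b` in the first case and `j_b` in the second (for `k ≠ 0`
the two forms are distinguished by whether the first component vanishes). -/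
noncomputable def FH (k : ℤ) (σ τ : ℝ) (b : ℤ × ℤ) (u : ℝ) : ℝ :=
  if b.1 = 0 then hH k σ τ b.2 u else jH k σ τ b.2 u

open Filter Topology in
/-- If `f` has growth `L u^m e^{αu}` then it cannot have a strictly larger growth as well. -/
lemma growth_aux {f : ℝ → ℝ} {α β m n L L' : ℝ} (hL' : 0 < L')
    (h1 : Tendsto (fun u => f u * Real.exp (-(α * u)) * u ^ (-m)) atTop (𝓝 L))
    (h2 : Tendsto (fun u => f u * Real.exp (-(β * u)) * u ^ (-n)) atTop (𝓝 L'))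
    (h3 : Tendsto (fun u : ℝ => u ^ (m - n) * Real.exp (-(β - α) * u)) atTop (𝓝 0)) : False := by
  have h4 := h1.mul h3
  rw [mul_zero] at h4
  have h5 : Tendsto (fun u => f u * Real.exp (-(β * u)) * u ^ (-n)) atTop (𝓝 0) := by
    refine h4.congr' ?_
    filter_upwards [eventually_gt_atTop 0] with u hu
    have e1 : Real.exp (-(β * u)) = Real.exp (-(α * u)) * Real.exp (-(β - α) * u) := by
      rw [← Real.exp_add]; congr 1; ring
    have e2 : u ^ (-n) = u ^ (-m) * u ^ (m - n) := by
      rw [← Real.rpow_add hu]; congr 1; ring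
    rw [e1, e2]; ring
  exact hL'.ne' (tendsto_nhds_unique h2 h5)

open Filter Topology in
lemma growth_le {f : ℝ → ℝ} {α β m n L L' : ℝ} (hL' : 0 < L')
    (h1 : Tendsto (fun u => f u * Real.exp (-(α * u)) * u ^ (-m)) atTop (𝓝 L))
    (h2 : Tendsto (fun u => f u * Real.exp (-(β * u)) * u ^ (-n)) atTop (𝓝 L')) :
    β ≤ α ∧ (α = β → n ≤ m) := by
  constructor
  · by_contra! hlt
    exact growth_aux hL' h1 h2
      (tendsto_rpow_mul_exp_neg_mul_atTop_nhds_zero _ _ (sub_pos.2 hlt))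
  · intro hab
    by_contra! hlt
    refine growth_aux hL' h1 h2 ?_
    subst hab
    have := tendsto_rpow_neg_atTop (sub_pos.2 hlt)
    simpa using this

open Filter Topology in
lemma growth_unique {f : ℝ → ℝ} {α β m n L L' : ℝ} (hL : 0 < L) (hL' : 0 < L')
    (h1 : Tendsto (fun u => f u * Real.exp (-(α * u)) * u ^ (-m)) atTop (𝓝 L))
    (h2 : Tendsto (fun u => f u * Real.exp (-(β * u)) * u ^ (-n)) atTop (𝓝 L')) :
    α = β ∧ m = n := by
  obtain ⟨a1, a2⟩ := growth_le hL' h1 h2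
  obtain ⟨b1, b2⟩ := growth_le hL h2 h1
  have hab : α = β := le_antisymm b1 a1
  exact ⟨hab, le_antisymm (b2 hab.symm) (a2 hab)⟩

open Filter Topology in
lemma exp_decay {a : ℝ} (ha : 0 < a) :
    Tendsto (fun u : ℝ => Real.exp (-a * u)) atTop (𝓝 0) := by
  simpa using tendsto_rpow_mul_exp_neg_mul_atTop_nhds_zero 0 a ha

open Filter Topology in
lemma id_exp_decay {a : ℝ} (ha : 0 < a) :
    Tendsto (fun u : ℝ => u * Real.exp (-a * u)) atTop (𝓝 0) := by
  simpa using tendsto_rpow_mul_exp_neg_mul_atTop_nhds_zero 1 a ha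

open Filter Topology in
lemma hH_growth_pos (k : ℤ) (σ τ : ℝ) (hσ : 0 < σ) (hτ : 0 < τ) (hlam : 0 < lamH k σ τ)
    (c : ℤ) (hc : 0 < c) :
    ∃ L : ℝ, 0 < L ∧ Tendsto (fun u => hH k σ τ c u * Real.exp (-((c₂H k σ τ * c) * u))
      * u ^ (-(1 : ℝ))) atTop (𝓝 L) := by
  have hc' : (0 : ℝ) < c := by exact_mod_cast hc
  refine ⟨σ / c, by positivity, ?_⟩
  have t1 := exp_decay (mul_pos hτ hc')
  have t2 := exp_decay (mul_pos hlam hc')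
  have t3 : Tendsto (fun u : ℝ => u⁻¹) atTop (𝓝 0) := tendsto_inv_atTop_zero
  have t4 := (((t1.sub t2).mul t3).mul_const (1 / ((k : ℝ) * (c : ℝ) ^ 2))).add_const (σ / c)
  simp only [sub_zero, mul_zero, zero_mul, zero_add] at t4
  refine t4.congr' ?_
  filter_upwards [eventually_gt_atTop 0] with u hu
  have e : Real.exp (c₂H k σ τ * c * u) * Real.exp (-(c₂H k σ τ * c * u)) = 1 := by
    rw [← Real.exp_add]; simp
  simp only [hH, qH, Real.rpow_neg_one, Int.cast_zero, mul_zero, zero_add]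
  have e1 : ∀ x y z : ℝ, x * y = 1 → x * z * y * u⁻¹ = z * u⁻¹ := by
    intro x y z hxy
    linear_combination (z * u⁻¹) * hxy
  rw [e1 _ _ _ e, add_mul]
  congr 1
  · simp only [neg_mul]; ring
  · field_simp

open Filter Topology in
lemma hH_growth_neg (k : ℤ) (hk : k ≠ 0) (σ τ : ℝ) (hσ : 0 < σ) (hτ : 0 < τ)
    (hlam : 0 < lamH k σ τ) (c : ℤ) (hc : c < 0) :
    ∃ L : ℝ, 0 < L ∧ Tendsto (fun u => hH k σ τ c u *
      Real.exp (-(((c₂H k σ τ - max τ (lamH k σ τ)) * c) * u)) * u ^ (-(0 : ℝ))) atTop (𝓝 L) := by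
  have hc' : (c : ℝ) < 0 := by exact_mod_cast hc
  have hc2 : (0 : ℝ) < -c := by linarith
  have hcs : (0 : ℝ) < (c : ℝ) ^ 2 := by nlinarith
  rcases lt_or_gt_of_ne hk with hk | hk
  · have hk' : (k : ℝ) < 0 := by exact_mod_cast hk
    have hlt : τ < lamH k σ τ := by unfold lamH; nlinarith
    rw [max_eq_right hlt.le]
    have t1 := exp_decay (mul_pos (sub_pos.2 hlt) hc2)
    have t2 := id_exp_decay (mul_pos hlam hc2)
    have t4 := ((t1.mul_const (1 / ((k : ℝ) * (c : ℝ) ^ 2))).add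
      (t2.mul_const (σ / c))).sub_const (1 / ((k : ℝ) * (c : ℝ) ^ 2))
    simp only [zero_mul, zero_add, zero_sub] at t4
    refine ⟨_, ?_, t4.congr ?_⟩
    · rw [neg_pos]
      exact one_div_neg.2 (mul_neg_of_neg_of_pos hk' hcs)
    · intro u
      simp only [hH, qH, Int.cast_zero, mul_zero, zero_add, neg_zero, Real.rpow_zero, mul_one]
      set l := lamH k σ τ
      set a := c₂H k σ τ
      have e1 : Real.exp (a * c * u) * Real.exp (-(τ * c * u)) * Real.exp (-((a - l) * c * u))
          = Real.exp (-((l - τ) * -c) * u) := by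
        rw [← Real.exp_add, ← Real.exp_add]; congr 1; ring
      have e2 : Real.exp (a * c * u) * Real.exp (-(l * c * u)) * Real.exp (-((a - l) * c * u))
          = 1 := by
        rw [← Real.exp_add, ← Real.exp_add, ← Real.exp_zero]; congr 1; ring
      have e3 : Real.exp (a * c * u) * Real.exp (-((a - l) * c * u))
          = Real.exp (-(l * -c) * u) := by
        rw [← Real.exp_add]; congr 1; ring
      linear_combination (-(1 / ((k : ℝ) * (c : ℝ) ^ 2))) * e1
        + (1 / ((k : ℝ) * (c : ℝ) ^ 2)) * e2 - (u * (σ / c)) * e3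
  · have hk' : (0 : ℝ) < k := by exact_mod_cast hk
    have hlt : lamH k σ τ < τ := by unfold lamH; nlinarith
    rw [max_eq_left hlt.le]
    have t1 := exp_decay (mul_pos (sub_pos.2 hlt) hc2)
    have t2 := id_exp_decay (mul_pos hτ hc2)
    have t4 := ((t2.mul_const (σ / c)).sub
      (t1.mul_const (1 / ((k : ℝ) * (c : ℝ) ^ 2)))).add_const (1 / ((k : ℝ) * (c : ℝ) ^ 2))
    simp only [zero_mul, zero_add, sub_zero] at t4
    refine ⟨_, ?_, t4.congr ?_⟩
    · positivity
    · intro u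
      simp only [hH, qH, Int.cast_zero, mul_zero, zero_add, neg_zero, Real.rpow_zero, mul_one]
      set l := lamH k σ τ
      set a := c₂H k σ τ
      have e1 : Real.exp (a * c * u) * Real.exp (-(l * c * u)) * Real.exp (-((a - τ) * c * u))
          = Real.exp (-((τ - l) * -c) * u) := by
        rw [← Real.exp_add, ← Real.exp_add]; congr 1; ring
      have e2 : Real.exp (a * c * u) * Real.exp (-(τ * c * u)) * Real.exp (-((a - τ) * c * u))
          = 1 := by
        rw [← Real.exp_add, ← Real.exp_add, ← Real.exp_zero]; congr 1; ring
      have e3 : Real.exp (a * c * u) * Real.exp (-((a - τ) * c * u))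
          = Real.exp (-(τ * -c) * u) := by
        rw [← Real.exp_add]; congr 1; ring
      linear_combination (1 / ((k : ℝ) * (c : ℝ) ^ 2)) * e1
        - (1 / ((k : ℝ) * (c : ℝ) ^ 2)) * e2 - (u * (σ / c)) * e3

lemma hH_inj (k : ℤ) (hk : k ≠ 0) (σ τ : ℝ) (hσ : 0 < σ) (hτ : 0 < τ)
    (hlam : 0 < lamH k σ τ) (c d : ℤ) (hc : c ≠ 0) (hd : d ≠ 0)
    (h : ∀ u, hH k σ τ c u = hH k σ τ d u) : c = d := by
  have hfun : hH k σ τ c = hH k σ τ d := funext h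
  have p1 : c₂H k σ τ ≠ 0 := by unfold c₂H; positivity
  have p2 : c₂H k σ τ - max τ (lamH k σ τ) ≠ 0 := by
    refine (sub_neg.2 ?_).ne
    unfold c₂H
    rw [div_lt_iff₀ (by positivity)]
    have m1 := le_max_left τ (lamH k σ τ)
    have m2 := le_max_right τ (lamH k σ τ)
    nlinarith [mul_pos hτ hlam, mul_pos hτ hτ, mul_pos hlam hlam,
      mul_le_mul_of_nonneg_right m1 hτ.le, mul_le_mul_of_nonneg_right m2 hlam.le,
      mul_le_mul_of_nonneg_right m1 hlam.le, mul_le_mul_of_nonneg_right m2 hτ.le]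
  rcases lt_or_gt_of_ne hc with hc | hc <;> rcases lt_or_gt_of_ne hd with hd | hd
  · obtain ⟨L, hL, h1⟩ := hH_growth_neg k hk σ τ hσ hτ hlam c hc
    obtain ⟨L', hL', h2⟩ := hH_growth_neg k hk σ τ hσ hτ hlam d hd
    rw [hfun] at h1
    have := (growth_unique hL hL' h1 h2).1
    exact_mod_cast mul_left_cancel₀ p2 this
  · obtain ⟨L, hL, h1⟩ := hH_growth_neg k hk σ τ hσ hτ hlam c hc
    obtain ⟨L', hL', h2⟩ := hH_growth_pos k σ τ hσ hτ hlam d hd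
    rw [hfun] at h1
    have := (growth_unique hL hL' h1 h2).2
    norm_num at this
  · obtain ⟨L, hL, h1⟩ := hH_growth_pos k σ τ hσ hτ hlam c hc
    obtain ⟨L', hL', h2⟩ := hH_growth_neg k hk σ τ hσ hτ hlam d hd
    rw [hfun] at h1
    have := (growth_unique hL hL' h1 h2).2
    norm_num at this
  · obtain ⟨L, hL, h1⟩ := hH_growth_pos k σ τ hσ hτ hlam c hc
    obtain ⟨L', hL', h2⟩ := hH_growth_pos k σ τ hσ hτ hlam d hd
    rw [hfun] at h1
    have := (growth_unique hL hL' h1 h2).1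
    exact_mod_cast mul_left_cancel₀ p1 this

lemma jH_eq (k : ℤ) (σ τ : ℝ) (hτ : 0 < τ) (hlam : 0 < lamH k σ τ) (c : ℤ) (u : ℝ) :
    jH k σ τ c u = hH k σ τ (-c) u := by
  have key : c₁H k σ τ * k = τ - 2 * c₂H k σ τ := by
    have hks : (k : ℝ) * σ = τ - lamH k σ τ := by unfold lamH; ring
    unfold c₁H c₂H
    have : τ + lamH k σ τ ≠ 0 := by positivity
    field_simp
    linear_combination (τ + 2 * lamH k σ τ) * hks
  have hq : qH k σ τ (k * c) c = (τ - c₂H k σ τ) * c := by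
    unfold qH; push_cast; linear_combination (c : ℝ) * key
  have hq2 : qH k σ τ 0 (-c) = - (c₂H k σ τ * c) := by
    unfold qH; push_cast; ring
  unfold jH hH
  rw [hq, hq2]
  set a := c₂H k σ τ
  push_cast
  have e1 : Real.exp ((τ - a) * c * u) = Real.exp (-(a * c) * u) * Real.exp (-(τ * -c * u)) := by
    rw [← Real.exp_add]; congr 1; ring
  have e2 : Real.exp ((τ - a) * c * u) * Real.exp (-(σ * k * c * u))
      = Real.exp (-(a * c) * u) * Real.exp (-(lamH k σ τ * -c * u)) := by
    rw [← Real.exp_add, ← Real.exp_add]; congr 1; unfold lamH; ring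
  have e3 : Real.exp ((τ - a) * c * u) * Real.exp (-(τ * c * u)) = Real.exp (-(a * c) * u) := by
    rw [← Real.exp_add]; congr 1; ring
  rw [neg_sq, div_neg]
  linear_combination (1 / ((k : ℝ) * (c : ℝ) ^ 2)) * e1
    - (1 / ((k : ℝ) * (c : ℝ) ^ 2)) * e2 - (σ * u / c) * e3

/-- Proposition 3.14 (PropSubt1beta) of the paper: if `b` and `b'` are of subtype (1)β and
their functions `u² S_{ψ_b}` agree, then `b ≡ b'`, i.e. `b' = b` or
`b' = (b₁ - k b₂, -b₂)`. -/
theorem hirzebruch_subtype1beta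
    (k : ℤ) (hk : k ≠ 0) (σ τ : ℝ) (hσ : 0 < σ) (hτ : 0 < τ) (hlam : 0 < lamH k σ τ)
    (b b' : ℤ × ℤ)
    (hb : (∃ c : ℤ, c ≠ 0 ∧ b = (0, c)) ∨ (∃ c : ℤ, c ≠ 0 ∧ b = (k * c, c)))
    (hb' : (∃ c : ℤ, c ≠ 0 ∧ b' = (0, c)) ∨ (∃ c : ℤ, c ≠ 0 ∧ b' = (k * c, c)))
    (h : ∀ u : ℝ, FH k σ τ b u = FH k σ τ b' u) :
    b' = b ∨ (b'.1 = b.1 - k * b.2 ∧ b'.2 = -b.2) := by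
  have h0 : ∀ c : ℤ, ∀ u, FH k σ τ (0, c) u = hH k σ τ c u := by
    intro c u; simp [FH]
  have h1 : ∀ c : ℤ, c ≠ 0 → ∀ u, FH k σ τ (k * c, c) u = hH k σ τ (-c) u := by
    intro c hc u
    rw [← jH_eq k σ τ hτ hlam]
    simp [FH, hk, hc]
  have inj := hH_inj k hk σ τ hσ hτ hlam
  rcases hb with ⟨c, hc, rfl⟩ | ⟨c, hc, rfl⟩ <;> rcases hb' with ⟨d, hd, rfl⟩ | ⟨d, hd, rfl⟩
  · left
    rw [inj c d hc hd (fun u => by rw [← h0, ← h0, h u])]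
  · right
    have := inj c (-d) hc (neg_ne_zero.2 hd) (fun u => by rw [← h0, ← h1 d hd, h u])
    subst this
    constructor <;> simp
  · right
    have := inj (-c) d (neg_ne_zero.2 hc) hd (fun u => by rw [← h0 d, ← h1 c hc, h u])
    subst this
    constructor <;> simp
  · left
    have := inj (-c) (-d) (neg_ne_zero.2 hc) (neg_ne_zero.2 hd)
      (fun u => by rw [← h1 c hc, ← h1 d hd, h u])
    rw [neg_inj.1 this]
end

section
/- Let b and b' be elements of ℤ², both of type 0 (b₁ ≠ 0, b₂ ≠ 0, b₀ := b₁ − kb₂ ≠ 0, and likewise for b'). Say that an element b of type 0 is of subtype α if τb₂ ≠ σb₁ and τb₂ + σb₀ ≠ 0; of subtype β if exactly one of the equalities τb₂ = σb₁, τb₂ + σb₀ = 0 holds; and of subtype γ if both hold. If b and b' belong to different subtypes, then f_b ≠ f_{b'}, i.e. there exists a real u with f_b(u) ≠ f_{b'}(u). -/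
/-- Subtype (0)α: the four exponents `q, q - τb₂, q - σb₁, q - τb₂ - σb₀` are pairwise
distinct. -/
def SubtypeAlpha (k : ℤ) (σ τ : ℝ) (b₁ b₂ : ℤ) : Prop :=
  τ * (b₂ : ℝ) ≠ σ * (b₁ : ℝ) ∧
    τ * (b₂ : ℝ) + σ * ((b₁ : ℝ) - (k : ℝ) * (b₂ : ℝ)) ≠ 0

/-- Subtype (0)β: exactly one of the two equalities holds. -/
def SubtypeBeta (k : ℤ) (σ τ : ℝ) (b₁ b₂ : ℤ) : Prop :=
  (τ * (b₂ : ℝ) = σ * (b₁ : ℝ) ∧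
      τ * (b₂ : ℝ) + σ * ((b₁ : ℝ) - (k : ℝ) * (b₂ : ℝ)) ≠ 0) ∨
  (τ * (b₂ : ℝ) ≠ σ * (b₁ : ℝ) ∧
      τ * (b₂ : ℝ) + σ * ((b₁ : ℝ) - (k : ℝ) * (b₂ : ℝ)) = 0)

/-- Subtype (0)γ: both equalities hold. -/
def SubtypeGamma (k : ℤ) (σ τ : ℝ) (b₁ b₂ : ℤ) : Prop :=
  τ * (b₂ : ℝ) = σ * (b₁ : ℝ) ∧
    τ * (b₂ : ℝ) + σ * ((b₁ : ℝ) - (k : ℝ) * (b₂ : ℝ)) = 0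

/-- The exponentials `u ↦ exp (e u)` are linearly independent. -/
theorem expLinInd : LinearIndependent ℝ (fun e : ℝ => fun u : ℝ => Real.exp (e * u)) := by
  let h : ℝ → (Multiplicative ℝ →* ℝ) := fun e =>
    { toFun := fun u => Real.exp (e * u.toAdd)
      map_one' := by simp
      map_mul' := fun x y => by simp [mul_add, Real.exp_add] }
  have hinj : Function.Injective h := by
    intro a c hac
    have h1 := DFunLike.congr_fun hac (Multiplicative.ofAdd (1 : ℝ))
    simpa [h] using h1
  exact (linearIndependent_monoidHom (Multiplicative ℝ) ℝ).comp h hinj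

/-- The finitely supported coefficient function of `f_b`. -/
noncomputable def coefF (k : ℤ) (σ τ : ℝ) (b₁ b₂ : ℤ) : ℝ →₀ ℝ :=
  Finsupp.single (qH k σ τ b₁ b₂) (1 / ((b₁ : ℝ) * (b₂ : ℝ)))
  + Finsupp.single (qH k σ τ b₁ b₂ - τ * b₂) (-(1 / (((b₁ : ℝ) - (k : ℝ) * (b₂ : ℝ)) * (b₂ : ℝ))))
  + Finsupp.single (qH k σ τ b₁ b₂ - σ * b₁) (-(1 / ((b₁ : ℝ) * (b₂ : ℝ))))
  + Finsupp.single (qH k σ τ b₁ b₂ - (τ * (b₂ : ℝ) + σ * ((b₁ : ℝ) - (k : ℝ) * (b₂ : ℝ))))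
      (1 / (((b₁ : ℝ) - (k : ℝ) * (b₂ : ℝ)) * (b₂ : ℝ)))

theorem coefF_comb (k : ℤ) (σ τ : ℝ) (b₁ b₂ : ℤ) :
    Finsupp.linearCombination ℝ (fun e : ℝ => fun u : ℝ => Real.exp (e * u)) (coefF k σ τ b₁ b₂)
      = fH k σ τ b₁ b₂ := by
  funext u
  simp only [coefF, map_add, Finsupp.linearCombination_single, Pi.add_apply, Pi.smul_apply,
    smul_eq_mul, fH, sub_mul, sub_eq_add_neg, Real.exp_add]
  simp only [sub_eq_add_neg, add_mul, neg_mul, neg_add, Real.exp_add]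
  ring

theorem coefF_eq (k : ℤ) (σ τ : ℝ) (b₁ b₂ b₁' b₂' : ℤ)
    (h : ∀ u, fH k σ τ b₁ b₂ u = fH k σ τ b₁' b₂' u) :
    coefF k σ τ b₁ b₂ = coefF k σ τ b₁' b₂' := by
  apply expLinInd
  rw [coefF_comb, coefF_comb]
  exact funext h

theorem coefF_card_le (k : ℤ) (σ τ : ℝ) (b₁ b₂ : ℤ)
    (h : τ * (b₂ : ℝ) = σ * (b₁ : ℝ) ∨
      τ * (b₂ : ℝ) + σ * ((b₁ : ℝ) - (k : ℝ) * (b₂ : ℝ)) = 0) :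
    (coefF k σ τ b₁ b₂).support.card ≤ 3 := by
  have key : ∀ x y z : ℝ, (∀ e, e ≠ x → e ≠ y → e ≠ z → coefF k σ τ b₁ b₂ e = 0) →
      (coefF k σ τ b₁ b₂).support.card ≤ 3 := by
    intro x y z hh
    refine le_trans (Finset.card_le_card (t := {x, y, z}) ?_) Finset.card_le_three
    intro e he
    by_contra hne
    simp only [Finset.mem_insert, Finset.mem_singleton, not_or] at hne
    exact (Finsupp.mem_support_iff.mp he) (hh e hne.1 hne.2.1 hne.2.2)
  rcases h with h | h
  · refine key (qH k σ τ b₁ b₂) (qH k σ τ b₁ b₂ - σ * b₁)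
      (qH k σ τ b₁ b₂ - (τ * (b₂ : ℝ) + σ * ((b₁ : ℝ) - (k : ℝ) * (b₂ : ℝ)))) ?_
    intro e h1 h2 h3
    have h4 : e ≠ qH k σ τ b₁ b₂ - τ * b₂ := by rw [h]; exact h2
    simp only [coefF, Finsupp.add_apply, Finsupp.single_eq_of_ne h1, Finsupp.single_eq_of_ne h2,
      Finsupp.single_eq_of_ne h3, Finsupp.single_eq_of_ne h4, add_zero]
  · refine key (qH k σ τ b₁ b₂) (qH k σ τ b₁ b₂ - σ * b₁) (qH k σ τ b₁ b₂ - τ * b₂) ?_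
    intro e h1 h2 h4
    have h3 : e ≠ qH k σ τ b₁ b₂ - (τ * (b₂ : ℝ) + σ * ((b₁ : ℝ) - (k : ℝ) * (b₂ : ℝ))) := by
      rw [h, sub_zero]; exact h1
    simp only [coefF, Finsupp.add_apply, Finsupp.single_eq_of_ne h1, Finsupp.single_eq_of_ne h2,
      Finsupp.single_eq_of_ne h3, Finsupp.single_eq_of_ne h4, add_zero]

theorem coefF_card_ge (k : ℤ) (σ τ : ℝ) (hσ : 0 < σ) (hτ : 0 < τ) (hlam : 0 < lamH k σ τ)
    (b₁ b₂ : ℤ) (hb : IsType0 k b₁ b₂)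
    (h23 : τ * (b₂ : ℝ) ≠ σ * (b₁ : ℝ))
    (h14 : τ * (b₂ : ℝ) + σ * ((b₁ : ℝ) - (k : ℝ) * (b₂ : ℝ)) ≠ 0) :
    4 ≤ (coefF k σ τ b₁ b₂).support.card := by
  obtain ⟨hb1, hb2, hb0⟩ := hb
  have r1 : (b₁ : ℝ) ≠ 0 := by exact_mod_cast hb1
  have r2 : (b₂ : ℝ) ≠ 0 := by exact_mod_cast hb2
  have r0 : (b₁ : ℝ) - (k : ℝ) * (b₂ : ℝ) ≠ 0 := by exact_mod_cast hb0
  unfold lamH at hlam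
  have h12 : τ * (b₂ : ℝ) ≠ 0 := mul_ne_zero hτ.ne' r2
  have h13 : σ * (b₁ : ℝ) ≠ 0 := mul_ne_zero hσ.ne' r1
  have h24 : σ * ((b₁ : ℝ) - (k : ℝ) * (b₂ : ℝ)) ≠ 0 := mul_ne_zero hσ.ne' r0
  have h34 : (τ - k * σ) * (b₂ : ℝ) ≠ 0 := mul_ne_zero hlam.ne' r2
  have ca : 1 / ((b₁ : ℝ) * (b₂ : ℝ)) ≠ 0 := one_div_ne_zero (mul_ne_zero r1 r2)
  have cb : 1 / (((b₁ : ℝ) - (k : ℝ) * (b₂ : ℝ)) * (b₂ : ℝ)) ≠ 0 :=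
    one_div_ne_zero (mul_ne_zero r0 r2)
  unfold coefF
  generalize 1 / ((b₁ : ℝ) * (b₂ : ℝ)) = A at *
  generalize 1 / (((b₁ : ℝ) - (k : ℝ) * (b₂ : ℝ)) * (b₂ : ℝ)) = B at *
  obtain ⟨x, hx⟩ : ∃ x, x = qH k σ τ b₁ b₂ := ⟨_, rfl⟩
  obtain ⟨y, hy⟩ : ∃ y, y = qH k σ τ b₁ b₂ - τ * b₂ := ⟨_, rfl⟩
  obtain ⟨z, hz⟩ : ∃ z, z = qH k σ τ b₁ b₂ - σ * b₁ := ⟨_, rfl⟩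
  obtain ⟨w, hw⟩ : ∃ w, w = qH k σ τ b₁ b₂ -
    (τ * (b₂ : ℝ) + σ * ((b₁ : ℝ) - (k : ℝ) * (b₂ : ℝ))) := ⟨_, rfl⟩
  rw [← hy, ← hz, ← hw, ← hx]
  have nxy : x ≠ y := fun h => h12 (by linarith)
  have nxz : x ≠ z := fun h => h13 (by linarith)
  have nxw : x ≠ w := fun h => h14 (by linarith)
  have nyz : y ≠ z := fun h => h23 (by linarith)
  have nyw : y ≠ w := fun h => h24 (by linarith)
  have nzw : z ≠ w := fun h => h34 (by linarith)
  have hc : ({x, y, z, w} : Finset ℝ).card = 4 := by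
    simp [nxy, nxz, nxw, nyz, nyw, nzw]
  rw [← hc]
  apply Finset.card_le_card
  intro e he
  simp only [Finset.mem_insert, Finset.mem_singleton] at he
  rw [Finsupp.mem_support_iff]
  rcases he with rfl | rfl | rfl | rfl <;>
    simp [Finsupp.single_apply, nxy, nxz, nxw, nyz, nyw, nzw, nxy.symm, nxz.symm, nxw.symm,
      nyz.symm, nyw.symm, nzw.symm, ca, cb]

/-- Subtype γ is empty. -/
theorem no_gamma (k : ℤ) (σ τ : ℝ) (hτ : 0 < τ) (hlam : 0 < lamH k σ τ)
    (b₁ b₂ : ℤ) (hb : IsType0 k b₁ b₂)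
    (h23 : τ * (b₂ : ℝ) = σ * (b₁ : ℝ))
    (h14 : τ * (b₂ : ℝ) + σ * ((b₁ : ℝ) - (k : ℝ) * (b₂ : ℝ)) = 0) : False := by
  have r2 : (b₂ : ℝ) ≠ 0 := by exact_mod_cast hb.2.1
  unfold lamH at hlam
  have h : (τ + (τ - k * σ)) * (b₂ : ℝ) = 0 := by linarith
  exact mul_ne_zero (by positivity) r2 h

/-- Proposition 3.5 (Propsubtype1) of the paper: two type-0 elements of `ℤ²` belonging to
different subtypes have different functions `f_b = u² S_{ψ_b}`. -/
theorem hirzebruch_type0_different_subtype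
    (k : ℤ) (hk : k ≠ 0) (σ τ : ℝ) (hσ : 0 < σ) (hτ : 0 < τ) (hlam : 0 < lamH k σ τ)
    (b₁ b₂ b₁' b₂' : ℤ) (hb : IsType0 k b₁ b₂) (hb' : IsType0 k b₁' b₂')
    (hdiff : ¬ ((SubtypeAlpha k σ τ b₁ b₂ ∧ SubtypeAlpha k σ τ b₁' b₂') ∨
        (SubtypeBeta k σ τ b₁ b₂ ∧ SubtypeBeta k σ τ b₁' b₂') ∨
        (SubtypeGamma k σ τ b₁ b₂ ∧ SubtypeGamma k σ τ b₁' b₂'))) :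
    ∃ u : ℝ, fH k σ τ b₁ b₂ u ≠ fH k σ τ b₁' b₂' u := by
  by_contra! hall
  have hF := coefF_eq k σ τ b₁ b₂ b₁' b₂' hall
  have hg := no_gamma k σ τ hτ hlam b₁ b₂ hb
  have hg' := no_gamma k σ τ hτ hlam b₁' b₂' hb'
  have hl := coefF_card_le k σ τ b₁ b₂
  have hl' := coefF_card_le k σ τ b₁' b₂'
  have hu := coefF_card_ge k σ τ hσ hτ hlam b₁ b₂ hb
  have hu' := coefF_card_ge k σ τ hσ hτ hlam b₁' b₂' hb'
  rw [← hF] at hl' hu'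
  unfold SubtypeAlpha SubtypeBeta SubtypeGamma at hdiff
  have contra : (coefF k σ τ b₁ b₂).support.card ≤ 3 →
    4 ≤ (coefF k σ τ b₁ b₂).support.card → False := fun _ _ => by omega
  tauto
end

section
/- Let b₁ and b₂ be nonzero integers. Then g_{(b₁,0)} ≠ h_{(0,b₂)} and g_{(b₁,0)} ≠ j_{(kb₂,b₂)}; i.e. in each case there exists a real u at which the two functions differ. (Elements of ℤ² of type 1 belonging to different subtypes have different classes S.) -/
open Filter Topology in
lemma expPoly_indep (P R : ℝ → ℝ) (s : Finset ℝ) :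
    (∀ u : ℝ, ∑ a ∈ s, (P a * u + R a) * Real.exp (a * u) = 0) → ∀ a ∈ s, P a = 0 := by
  induction s using Finset.induction_on_max with
  | empty => simp
  | insert m s hm ih =>
    intro h
    have hnot : m ∉ s := fun hh => lt_irrefl _ (hm m hh)
    have hlim : Tendsto (fun u : ℝ => ∑ a ∈ s, (P a * u + R a) * Real.exp ((a - m) * u))
        atTop (𝓝 0) := by
      rw [← Finset.sum_const_zero (s := s)]
      refine tendsto_finsetSum _ fun a ha => ?_
      have hc : 0 < m - a := sub_pos.2 (hm a ha)
      have h1 := Real.tendsto_pow_mul_exp_neg_atTop_nhds_zero 1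
      have h0 := Real.tendsto_pow_mul_exp_neg_atTop_nhds_zero 0
      have hl : Tendsto (fun u : ℝ => (m - a) * u) atTop atTop :=
        tendsto_id.const_mul_atTop hc
      have h2 := ((h1.comp hl).const_mul (P a / (m - a))).add ((h0.comp hl).const_mul (R a))
      simp only [mul_zero, add_zero] at h2
      refine h2.congr fun u => ?_
      have e : (a - m) * u = -((m - a) * u) := by ring
      simp only [Function.comp, e]
      field_simp
    have heq : ∀ u : ℝ, P m * u + R m =
        -∑ a ∈ s, (P a * u + R a) * Real.exp ((a - m) * u) := by
      intro u
      have h3 := h u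
      rw [Finset.sum_insert hnot] at h3
      have h4 : ∑ a ∈ s, (P a * u + R a) * Real.exp (a * u) =
          (∑ a ∈ s, (P a * u + R a) * Real.exp ((a - m) * u)) * Real.exp (m * u) := by
        rw [Finset.sum_mul]
        refine Finset.sum_congr rfl fun a _ => ?_
        rw [mul_assoc, ← Real.exp_add]
        congr 2
        ring
      rw [h4, ← add_mul] at h3
      have := (mul_eq_zero.1 h3).resolve_right (Real.exp_ne_zero _)
      linarith
    have hl2 : Tendsto (fun u : ℝ => P m * u + R m) atTop (𝓝 0) := by
      have := hlim.neg
      rw [neg_zero] at this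
      exact this.congr fun u => (heq u).symm
    have hP : P m = 0 := by
      have h5 := (hl2.comp (tendsto_atTop_add_const_right atTop (1 : ℝ) tendsto_id)).sub hl2
      have h6 : Tendsto (fun _ : ℝ => P m) atTop (𝓝 (0 - 0)) := by
        refine h5.congr fun u => ?_
        simp only [Function.comp, id]
        ring
      simpa using tendsto_nhds_unique tendsto_const_nhds h6
    have hR : R m = 0 := by
      rw [hP] at hl2
      simp only [zero_mul, zero_add] at hl2
      exact tendsto_nhds_unique tendsto_const_nhds hl2
    intro a ha
    rcases Finset.mem_insert.1 ha with rfl | ha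
    · exact hP
    · refine ih (fun u => ?_) a ha
      have h3 := h u
      rw [Finset.sum_insert hnot, hP, hR] at h3
      simpa using h3

lemma expPoly_absurd (A B C D E x y z p q r t : ℝ) (hAB : A ≠ B) (hx : x ≠ 0) (hy : y ≠ 0)
    (h : ∀ u : ℝ, (x * u + p) * Real.exp (A * u) + (y * u + q) * Real.exp (B * u)
      + z * u * Real.exp (C * u) + r * Real.exp (D * u) + t * Real.exp (E * u) = 0) : False := by
  have key := expPoly_indep
    (fun a => (if a = A then x else 0) + (if a = B then y else 0) + (if a = C then z else 0))
    (fun a => (if a = A then p else 0) + (if a = B then q else 0) + (if a = D then r else 0)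
      + (if a = E then t else 0)) {A, B, C, D, E} (by
      intro u
      refine Eq.trans ?_ (h u)
      simp only [add_mul, ite_mul, zero_mul, Finset.sum_add_distrib, Finset.sum_ite_eq',
        Finset.mem_insert, Finset.mem_singleton, true_or, or_true, if_true]
      ring)
  have hA := key A (by simp)
  have hB := key B (by simp)
  simp only [if_true, if_neg hAB, if_neg hAB.symm] at hA hB
  by_cases h1 : A = C
  · have h2 : B ≠ C := fun h2 => hAB (h1.trans h2.symm)
    rw [if_neg h2] at hB
    exact hy (by linarith)
  · rw [if_neg h1] at hA
    exact hx (by linarith)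

/-- Proposition 3.12 (Propsubtype) of the paper: type-1 elements of `ℤ²` belonging to different
subtypes have different classes `S`; concretely, for nonzero integers `b₁, b₂` the function
`g_{(b₁,0)}` differs both from `h_{(0,b₂)}` and from `j_{(k b₂, b₂)}`. -/
theorem hirzebruch_type1_different_subtype
    (k : ℤ) (hk : k ≠ 0) (σ τ : ℝ) (hσ : 0 < σ) (hτ : 0 < τ) (hlam : 0 < lamH k σ τ)
    (b₁ b₂ : ℤ) (hb₁ : b₁ ≠ 0) (hb₂ : b₂ ≠ 0) :
    (∃ u : ℝ, gH k σ τ b₁ u ≠ hH k σ τ b₂ u) ∧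
      (∃ u : ℝ, gH k σ τ b₁ u ≠ jH k σ τ b₂ u) := by
  have hb₁' : (b₁ : ℝ) ≠ 0 := Int.cast_ne_zero.2 hb₁
  have hx : τ / (b₁ : ℝ) ≠ 0 := div_ne_zero hτ.ne' hb₁'
  have hy : -(lamH k σ τ / (b₁ : ℝ)) ≠ 0 := neg_ne_zero.2 (div_ne_zero hlam.ne' hb₁')
  have hAB : qH k σ τ b₁ 0 ≠ qH k σ τ b₁ 0 - σ * (b₁ : ℝ) := by
    have := mul_ne_zero hσ.ne' hb₁'
    intro h
    apply this
    linarith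
  have split : ∀ Q c u : ℝ, Real.exp ((Q - c) * u) = Real.exp (Q * u) * Real.exp (-(c * u)) := by
    intro Q c u
    rw [← Real.exp_add]
    congr 1
    ring
  constructor
  · by_contra hcon
    push Not at hcon
    refine expPoly_absurd (qH k σ τ b₁ 0) (qH k σ τ b₁ 0 - σ * (b₁ : ℝ)) (qH k σ τ 0 b₂)
      (qH k σ τ 0 b₂ - τ * (b₂ : ℝ)) (qH k σ τ 0 b₂ - lamH k σ τ * (b₂ : ℝ))
      (τ / (b₁ : ℝ)) (-(lamH k σ τ / (b₁ : ℝ))) (-(σ / (b₂ : ℝ)))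
      (-((k : ℝ) / (b₁ : ℝ) ^ 2)) ((k : ℝ) / (b₁ : ℝ) ^ 2)
      (-(1 / ((k : ℝ) * (b₂ : ℝ) ^ 2))) (1 / ((k : ℝ) * (b₂ : ℝ) ^ 2)) hAB hx hy fun u => ?_
    have h := sub_eq_zero.2 (hcon u)
    rw [← h, split, split, split, gH, hH]
    ring
  · by_contra hcon
    push Not at hcon
    refine expPoly_absurd (qH k σ τ b₁ 0) (qH k σ τ b₁ 0 - σ * (b₁ : ℝ))
      (qH k σ τ (k * b₂) b₂ - τ * (b₂ : ℝ))
      (qH k σ τ (k * b₂) b₂) (qH k σ τ (k * b₂) b₂ - σ * (k : ℝ) * (b₂ : ℝ))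
      (τ / (b₁ : ℝ)) (-(lamH k σ τ / (b₁ : ℝ))) (σ / (b₂ : ℝ))
      (-((k : ℝ) / (b₁ : ℝ) ^ 2)) ((k : ℝ) / (b₁ : ℝ) ^ 2)
      (-(1 / ((k : ℝ) * (b₂ : ℝ) ^ 2))) (1 / ((k : ℝ) * (b₂ : ℝ) ^ 2)) hAB hx hy fun u => ?_
    have h := sub_eq_zero.2 (hcon u)
    rw [← h, split, split, split, gH, jH]
    ring
end

section
/- Let b = (b₁,b₂) ∈ ℤ² be of type 0 (b₁ ≠ 0, b₂ ≠ 0, b₀ := b₁ − kb₂ ≠ 0) and set b' := (b₁ − kb₂, −b₂). Then b' is also of type 0, and f_b(u) = f_{b'}(u) for every real u. -/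
/-- The implication (a) ⟹ (c) of Theorem 1.7 for type-0 elements (consistent with
Proposition 3.2 of the paper): for `b = (b₁,b₂)` of type 0 and `b' = (b₁ - k b₂, -b₂)`,
`b'` is of type 0 and `f_b = f_{b'}` as functions on `ℝ`. -/
theorem hirzebruch_type0_equiv_implies_S_eq
    (k : ℤ) (hk : k ≠ 0) (σ τ : ℝ) (hσ : 0 < σ) (hτ : 0 < τ) (hlam : 0 < lamH k σ τ)
    (b₁ b₂ : ℤ) (hb : IsType0 k b₁ b₂) :
    IsType0 k (b₁ - k * b₂) (-b₂) ∧
      ∀ u : ℝ, fH k σ τ b₁ b₂ u = fH k σ τ (b₁ - k * b₂) (-b₂) u := by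
  obtain ⟨h1, h2, h0⟩ := hb
  refine ⟨⟨h0, neg_ne_zero.mpr h2, by simpa using h1⟩, fun u => ?_⟩
  have hq : qH k σ τ b₁ b₂ = qH k σ τ (b₁ - k * b₂) (-b₂) + τ * (b₂ : ℝ) := by
    have hL : lamH k σ τ = τ - (k : ℝ) * σ := rfl
    have hne : τ + lamH k σ τ ≠ 0 := by positivity
    have hc : (k : ℝ) * c₁H k σ τ + 2 * c₂H k σ τ = τ := by
      unfold c₁H c₂H
      have hs : (k : ℝ) * σ = τ - lamH k σ τ := by rw [hL]; ring
      generalize lamH k σ τ = l at *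
      field_simp
      linear_combination (τ + 2 * l) * hs
    unfold qH
    push_cast
    linear_combination (b₂ : ℝ) * hc
  unfold fH
  rw [hq]
  push_cast
  have e0 : (b₁ : ℝ) - k * b₂ - k * -b₂ = b₁ := by ring
  rw [e0]
  generalize qH k σ τ (b₁ - k * b₂) (-b₂) = q
  have hE : Real.exp ((q + τ * (b₂ : ℝ)) * u)
      = Real.exp (q * u) * Real.exp (τ * b₂ * u) := by
    rw [← Real.exp_add]; congr 1; ring
  have hA : Real.exp (τ * b₂ * u) * Real.exp (-(τ * b₂ * u)) = 1 := by
    rw [← Real.exp_add]; simp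
  have hB : Real.exp (τ * b₂ * u) * Real.exp (-(σ * b₁ * u))
      = Real.exp (-((τ * -b₂ + σ * b₁) * u)) := by
    rw [← Real.exp_add]; congr 1; ring
  have hC : Real.exp (τ * b₂ * u)
        * Real.exp (-((τ * (b₂ : ℝ) + σ * ((b₁ : ℝ) - k * b₂)) * u))
      = Real.exp (-(σ * ((b₁ : ℝ) - k * b₂) * u)) := by
    rw [← Real.exp_add]; congr 1; ring
  have hD : Real.exp (-(τ * -(b₂ : ℝ) * u)) = Real.exp (τ * b₂ * u) := by
    congr 1; ring
  rw [hE, ← hB, ← hC, hD, mul_neg, mul_neg, div_neg, div_neg, div_neg, div_neg]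
  linear_combination (-Real.exp (q * u) / (((b₁ : ℝ) - k * b₂) * b₂)) * hA
end

section
/- Let S² := {x ∈ ℝ³ : ‖x‖ = 1}, and for θ ∈ ℝ let R_θ : S² → S² be the rotation by angle θ about the third coordinate axis, given by the matrix with rows (cos θ, −sin θ, 0), (sin θ, cos θ, 0), (0,0,1). For b = (b₁,b₂) ∈ ℤ² define the circle action ψ_b on S²×S² by ψ_b(t)(z,w) = (R_{2πb₂t}·z, R_{2πb₁t}·w). If b' = (b₁',b₂') ∈ ℤ² satisfies |b₁'| = |b₁| and |b₂'| = |b₂|, then ψ_b and ψ_{b'} are homotopic through circle actions by isometries: there exists a continuous map F : [0,1] × ℝ × (S²×S²) → S²×S² such that for every s ∈ [0,1], F(s,0,·) = id, F(s,t+t',·) = F(s,t, F(s,t',·)) for all t,t' ∈ ℝ, F(s,1,·) = id, each map F(s,t,·) : S²×S² → S²×S² is an isometry (for the metric induced from the Euclidean metric of ℝ³×ℝ³), and F(0,t,·) = ψ_b(t), F(1,t,·) = ψ_{b'}(t) for all t. -/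
noncomputable section

/-- The unit sphere `S² = {x ∈ ℝ³ : ‖x‖ = 1}` in Euclidean `ℝ³`. -/
def Sph : Type := {x : EuclideanSpace ℝ (Fin 3) // ‖x‖ = 1}

instance : TopologicalSpace Sph := by unfold Sph; infer_instance

instance : CoeOut Sph (EuclideanSpace ℝ (Fin 3)) := ⟨fun x => x.1⟩

/-- Rotation of `ℝ³` by angle `θ` about the third coordinate axis, given by the matrix with rows
`(cos θ, −sin θ, 0)`, `(sin θ, cos θ, 0)`, `(0,0,1)`. -/
def rot3 (θ : ℝ) (v : EuclideanSpace ℝ (Fin 3)) : EuclideanSpace ℝ (Fin 3) :=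
  (WithLp.equiv 2 (Fin 3 → ℝ)).symm
    ![Real.cos θ * v 0 - Real.sin θ * v 1,
      Real.sin θ * v 0 + Real.cos θ * v 1,
      v 2]

/-- The distance on `S² × S²` induced from the Euclidean metric of `ℝ³ × ℝ³`. -/
def pdist (p q : Sph × Sph) : ℝ :=
  Real.sqrt (dist (p.1 : EuclideanSpace ℝ (Fin 3)) (q.1 : EuclideanSpace ℝ (Fin 3)) ^ 2 +
    dist (p.2 : EuclideanSpace ℝ (Fin 3)) (q.2 : EuclideanSpace ℝ (Fin 3)) ^ 2)

end

noncomputable section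

/-- Rotation about the first coordinate axis. -/
def tilt3 (θ : ℝ) (v : EuclideanSpace ℝ (Fin 3)) : EuclideanSpace ℝ (Fin 3) :=
  (WithLp.equiv 2 (Fin 3 → ℝ)).symm
    ![v 0, Real.cos θ * v 1 - Real.sin θ * v 2,
      Real.sin θ * v 1 + Real.cos θ * v 2]

lemma rot3_add (θ φ : ℝ) (v : EuclideanSpace ℝ (Fin 3)) :
    rot3 (θ + φ) v = rot3 θ (rot3 φ v) := by
  ext i
  fin_cases i <;> simp [rot3, Real.cos_add, Real.sin_add] <;> ring

lemma tilt3_add (θ φ : ℝ) (v : EuclideanSpace ℝ (Fin 3)) :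
    tilt3 (θ + φ) v = tilt3 θ (tilt3 φ v) := by
  ext i
  fin_cases i <;> simp [tilt3, Real.cos_add, Real.sin_add] <;> ring

lemma rot3_int (n : ℤ) (v : EuclideanSpace ℝ (Fin 3)) : rot3 (2 * Real.pi * n) v = v := by
  have hc : Real.cos (2 * Real.pi * n) = 1 := by
    rw [mul_comm]; exact Real.cos_int_mul_two_pi n
  have hs : Real.sin (2 * Real.pi * n) = 0 := by
    have := Real.sin_int_mul_pi (2 * n)
    push_cast at this
    rw [← this]; ring_nf
  ext i
  fin_cases i <;> simp [rot3, hc, hs]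

lemma rot3_zero (v : EuclideanSpace ℝ (Fin 3)) : rot3 0 v = v := by
  simpa using rot3_int 0 v

lemma tilt3_zero (v : EuclideanSpace ℝ (Fin 3)) : tilt3 0 v = v := by
  ext i
  fin_cases i <;> simp [tilt3]

lemma rot3_dist (θ : ℝ) (v w : EuclideanSpace ℝ (Fin 3)) :
    dist (rot3 θ v) (rot3 θ w) = dist v w := by
  rw [EuclideanSpace.dist_eq, EuclideanSpace.dist_eq]
  congr 1
  simp only [Fin.sum_univ_three, Real.dist_eq, sq_abs]
  simp [rot3]
  linear_combination ((v 0 - w 0) ^ 2 + (v 1 - w 1) ^ 2) * Real.sin_sq_add_cos_sq θ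

lemma tilt3_dist (θ : ℝ) (v w : EuclideanSpace ℝ (Fin 3)) :
    dist (tilt3 θ v) (tilt3 θ w) = dist v w := by
  rw [EuclideanSpace.dist_eq, EuclideanSpace.dist_eq]
  congr 1
  simp only [Fin.sum_univ_three, Real.dist_eq, sq_abs]
  simp [tilt3]
  linear_combination ((v 1 - w 1) ^ 2 + (v 2 - w 2) ^ 2) * Real.sin_sq_add_cos_sq θ

lemma rot3_origin (θ : ℝ) : rot3 θ 0 = 0 := by
  ext i
  fin_cases i <;> simp [rot3]

lemma tilt3_origin (θ : ℝ) : tilt3 θ 0 = 0 := by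
  ext i
  fin_cases i <;> simp [tilt3]

lemma continuous_rot3 : Continuous fun p : ℝ × EuclideanSpace ℝ (Fin 3) => rot3 p.1 p.2 := by
  refine (PiLp.continuous_toLp 2 _).comp (continuous_pi fun i => ?_)
  fin_cases i <;> simp <;> fun_prop

lemma continuous_tilt3 : Continuous fun p : ℝ × EuclideanSpace ℝ (Fin 3) => tilt3 p.1 p.2 := by
  refine (PiLp.continuous_toLp 2 _).comp (continuous_pi fun i => ?_)
  fin_cases i <;> simp <;> fun_prop

/-- Rotation by `θ` about the axis tilted by `a`. -/
def conj3 (a θ : ℝ) (v : EuclideanSpace ℝ (Fin 3)) : EuclideanSpace ℝ (Fin 3) :=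
  tilt3 a (rot3 θ (tilt3 (-a) v))

lemma conj3_dist (a θ : ℝ) (v w : EuclideanSpace ℝ (Fin 3)) :
    dist (conj3 a θ v) (conj3 a θ w) = dist v w := by
  simp only [conj3, tilt3_dist, rot3_dist]

lemma conj3_norm (a θ : ℝ) (v : EuclideanSpace ℝ (Fin 3)) : ‖conj3 a θ v‖ = ‖v‖ := by
  have h := conj3_dist a θ v 0
  have h0 : conj3 a θ 0 = 0 := by simp only [conj3, tilt3_origin, rot3_origin]
  rwa [h0, dist_zero_right, dist_zero_right] at h

lemma conj3_add (a θ φ : ℝ) (v : EuclideanSpace ℝ (Fin 3)) :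
    conj3 a (θ + φ) v = conj3 a θ (conj3 a φ v) := by
  simp only [conj3]
  rw [← tilt3_add (-a) a, neg_add_cancel, tilt3_zero, rot3_add]

lemma conj3_int (a : ℝ) (n : ℤ) (v : EuclideanSpace ℝ (Fin 3)) :
    conj3 a (2 * Real.pi * n) v = v := by
  simp only [conj3]
  rw [rot3_int, ← tilt3_add, add_neg_cancel, tilt3_zero]

lemma conj3_zero (θ : ℝ) (v : EuclideanSpace ℝ (Fin 3)) : conj3 0 θ v = rot3 θ v := by
  simp only [conj3, neg_zero, tilt3_zero]

lemma conj3_pi (θ : ℝ) (v : EuclideanSpace ℝ (Fin 3)) : conj3 Real.pi θ v = rot3 (-θ) v := by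
  ext i
  fin_cases i <;> simp [conj3, tilt3, rot3] <;> ring

lemma continuous_conj3 :
    Continuous fun p : ℝ × ℝ × EuclideanSpace ℝ (Fin 3) => conj3 p.1 p.2.1 p.2.2 := by
  have h1 : Continuous fun p : ℝ × ℝ × EuclideanSpace ℝ (Fin 3) => tilt3 (-p.1) p.2.2 :=
    continuous_tilt3.comp (by fun_prop :
      Continuous fun p : ℝ × ℝ × EuclideanSpace ℝ (Fin 3) => (-p.1, p.2.2))
  have h2 := continuous_rot3.comp ((continuous_fst.comp continuous_snd).prodMk h1)
  exact continuous_tilt3.comp (continuous_fst.prodMk h2)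

/-- The homotopy on a single sphere factor. -/
lemma single_factor (b b' : ℤ) (h : |b'| = |b|) :
    ∃ G : Set.Icc (0 : ℝ) 1 × ℝ × Sph → Sph,
      Continuous G ∧
      (∀ s p, G (s, 0, p) = p) ∧
      (∀ s t t' p, G (s, t + t', p) = G (s, t, G (s, t', p))) ∧
      (∀ s p, G (s, 1, p) = p) ∧
      (∀ s t p q, dist (G (s, t, p)).1 (G (s, t, q)).1 = dist p.1 q.1) ∧
      (∀ (t : ℝ) (p : Sph), (G (⟨0, by norm_num⟩, t, p)).1 = rot3 (2 * Real.pi * b * t) p.1) ∧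
      (∀ (t : ℝ) (p : Sph), (G (⟨1, by norm_num⟩, t, p)).1 = rot3 (2 * Real.pi * b' * t) p.1) := by
  obtain ⟨k, hk⟩ : ∃ k : ℝ, ∀ (t : ℝ) (v : EuclideanSpace ℝ (Fin 3)),
      conj3 k (2 * Real.pi * b * t) v = rot3 (2 * Real.pi * b' * t) v := by
    rcases abs_eq_abs.mp h with rfl | rfl
    · exact ⟨0, fun t v => conj3_zero _ v⟩
    · refine ⟨Real.pi, fun t v => ?_⟩
      rw [conj3_pi]
      congr 1
      push_cast
      ring
  refine ⟨fun x => ⟨conj3 (k * x.1.1) (2 * Real.pi * b * x.2.1) x.2.2.1,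
    (conj3_norm _ _ _).trans x.2.2.2⟩, ?_, ?_, ?_, ?_, ?_, ?_, ?_⟩
  · have hv : Continuous fun x : Sph => x.1 := continuous_subtype_val
    refine Continuous.subtype_mk (continuous_conj3.comp
      (f := fun x : Set.Icc (0 : ℝ) 1 × ℝ × Sph =>
        (k * x.1.1, 2 * Real.pi * b * x.2.1, x.2.2.1)) ?_) _
    refine Continuous.prodMk (by fun_prop) (Continuous.prodMk (by fun_prop) ?_)
    exact hv.comp (continuous_snd.comp continuous_snd)
  · intro s p
    apply Subtype.ext
    simpa using conj3_int (k * s.1) 0 p.1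
  · intro s t t' p
    apply Subtype.ext
    simp only [mul_add]
    exact conj3_add _ _ _ _
  · intro s p
    apply Subtype.ext
    simpa using conj3_int (k * s.1) b p.1
  · intro s t p q
    exact conj3_dist _ _ _ _
  · intro t p
    simpa using conj3_zero _ _
  · intro t p
    simpa using hk t p.1

end

/-- The homotopy construction proving (i) ⟹ (iii) of Theorem 1.9 (Thmspheres) of the paper:
if `|b₁'| = |b₁|` and `|b₂'| = |b₂|`, the circle actions
`ψ_b(t)(z,w) = (R_{2πb₂t} z, R_{2πb₁t} w)` and `ψ_{b'}` on `S² × S²` are homotopic through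
circle actions acting by isometries of the metric induced from the Euclidean metric of
`ℝ³ × ℝ³`. -/
theorem sphere_circle_actions_homotopic
    (b₁ b₂ b₁' b₂' : ℤ) (h1 : |b₁'| = |b₁|) (h2 : |b₂'| = |b₂|) :
    ∃ F : Set.Icc (0 : ℝ) 1 × ℝ × (Sph × Sph) → Sph × Sph,
      Continuous F ∧
      (∀ s p, F (s, 0, p) = p) ∧
      (∀ s t t' p, F (s, t + t', p) = F (s, t, F (s, t', p))) ∧
      (∀ s p, F (s, 1, p) = p) ∧
      (∀ s t p q, pdist (F (s, t, p)) (F (s, t, q)) = pdist p q) ∧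
      (∀ (t : ℝ) (p : Sph × Sph),
        ((F (⟨0, by norm_num⟩, t, p)).1 : EuclideanSpace ℝ (Fin 3)) =
            rot3 (2 * Real.pi * b₂ * t) (p.1 : EuclideanSpace ℝ (Fin 3)) ∧
        ((F (⟨0, by norm_num⟩, t, p)).2 : EuclideanSpace ℝ (Fin 3)) =
            rot3 (2 * Real.pi * b₁ * t) (p.2 : EuclideanSpace ℝ (Fin 3))) ∧
      (∀ (t : ℝ) (p : Sph × Sph),
        ((F (⟨1, by norm_num⟩, t, p)).1 : EuclideanSpace ℝ (Fin 3)) =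
            rot3 (2 * Real.pi * b₂' * t) (p.1 : EuclideanSpace ℝ (Fin 3)) ∧
        ((F (⟨1, by norm_num⟩, t, p)).2 : EuclideanSpace ℝ (Fin 3)) =
            rot3 (2 * Real.pi * b₁' * t) (p.2 : EuclideanSpace ℝ (Fin 3))) := by
  obtain ⟨G, g1, g2, g3, g4, g5, g6, g7⟩ := single_factor b₂ b₂' h2
  obtain ⟨H, k1, k2, k3, k4, k5, k6, k7⟩ := single_factor b₁ b₁' h1
  refine ⟨fun x => (G (x.1, x.2.1, x.2.2.1), H (x.1, x.2.1, x.2.2.2)), ?_, ?_, ?_, ?_, ?_, ?_, ?_⟩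
  · exact (g1.comp (by fun_prop)).prodMk (k1.comp (by fun_prop))
  · intro s p
    exact Prod.ext (g2 s p.1) (k2 s p.2)
  · intro s t t' p
    exact Prod.ext (g3 s t t' p.1) (k3 s t t' p.2)
  · intro s p
    exact Prod.ext (g4 s p.1) (k4 s p.2)
  · intro s t p q
    simp only [pdist, g5, k5]
  · intro t p
    exact ⟨g6 t p.1, k6 t p.2⟩
  · intro t p
    exact ⟨g7 t p.1, k7 t p.2⟩
end
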